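/- arXiv:2302.01587 — 7 statements merged into one kernel-verified Lean document; each statement's English description precedes it below -/
import Mathlib

section
/- Let G be a finite connected simple graph with at least one edge. Then gp_e(G) = m(G) if and only if diam(G) ≤ 2, where m(G) is the number of edges of G and diam(G) is the diameter of G. -/
/-- `X` is an edge general position set of `G`: `X` consists of edges of `G` and every
shortest path of `G` contains at most two edges of `X`. -/
def SimpleGraph.IsEdgeGPSet {V : Type*} (G : SimpleGraph V) (X : Set (Sym2 V)) : Prop :=
  X ⊆ G.edgeSet ∧
    ∀ (u v : V) (p : G.Walk u v), p.IsPath → p.length = G.dist u v →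
      (X ∩ {e | e ∈ p.edges}).ncard ≤ 2

/-- The edge general position number of `G`. -/
noncomputable def SimpleGraph.egp {V : Type*} (G : SimpleGraph V) : ℕ :=
  sSup {n | ∃ X : Set (Sym2 V), G.IsEdgeGPSet X ∧ X.ncard = n}

/-!
A shortest path of length `k` has exactly `k` distinct edges, so `E(G)` is in edge general position
if and only if no two vertices of the same component are at distance three or more. When `E(G)` is
finite, `gp_e(G)` is attained, and the only set of edges that can attain `m(G)` is `E(G)` itself.
-/

section

variable {V : Type*} {G : SimpleGraph V}

lemma ncard_edgeSet_of_isTrail {u v : V} {p : G.Walk u v} (hp : p.IsTrail) :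
    p.edgeSet.ncard = p.length := by
  classical
  rw [← p.coe_edges_toFinset, Set.ncard_coe_finset, List.toFinset_card_of_nodup hp.edges_nodup,
    p.length_edges]

lemma diam_le_iff_forall_dist_le (hG : G.ediam ≠ ⊤) {k : ℕ} :
    G.diam ≤ k ↔ ∀ u v, G.dist u v ≤ k := by
  rw [← Nat.cast_le (α := ℕ∞), SimpleGraph.diam, ENat.natCast_toNat hG, SimpleGraph.ediam_le_iff]
  refine forall₂_congr fun u v ↦ ?_
  have huv : G.Reachable u v := SimpleGraph.preconnected_of_ediam_ne_top hG u v
  rw [← huv.coe_dist_eq_edist, Nat.cast_le]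

lemma isEdgeGPSet_empty : G.IsEdgeGPSet ∅ :=
  ⟨Set.empty_subset _, fun _ _ _ _ _ ↦ by simp⟩

lemma isEdgeGPSet_edgeSet_iff_forall_dist_le_two :
    G.IsEdgeGPSet G.edgeSet ↔ ∀ u v, G.Reachable u v → G.dist u v ≤ 2 := by
  have ncard_inter {u v : V} {p : G.Walk u v} (hp : p.IsPath) :
      (G.edgeSet ∩ {e | e ∈ p.edges}).ncard = p.length := by
    have edges_subset : {e | e ∈ p.edges} ⊆ G.edgeSet := p.edges_subset_edgeSet
    rw [Set.inter_eq_right.mpr edges_subset]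
    exact ncard_edgeSet_of_isTrail hp.isTrail
  constructor
  · rintro ⟨-, h⟩ u v huv
    obtain ⟨p, hp, hlen⟩ := huv.exists_path_of_dist
    rw [← hlen, ← ncard_inter hp]
    exact h u v p hp hlen
  · intro h
    refine ⟨subset_rfl, fun u v p hp hlen ↦ ?_⟩
    rw [ncard_inter hp, hlen]
    exact h u v p.reachable

lemma isGreatest_egp [Finite G.edgeSet] :
    IsGreatest {n | ∃ X : Set (Sym2 V), G.IsEdgeGPSet X ∧ X.ncard = n} G.egp := by
  have bddAbove : BddAbove {n | ∃ X : Set (Sym2 V), G.IsEdgeGPSet X ∧ X.ncard = n} := by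
    refine ⟨G.edgeSet.ncard, ?_⟩
    rintro _ ⟨X, hX, rfl⟩
    exact Set.ncard_le_ncard hX.1
  exact ⟨Nat.sSup_mem ⟨_, ∅, isEdgeGPSet_empty, rfl⟩ bddAbove, fun _ ↦ le_csSup bddAbove⟩

lemma egp_eq_ncard_edgeSet_iff [Finite G.edgeSet] :
    G.egp = G.edgeSet.ncard ↔ G.IsEdgeGPSet G.edgeSet := by
  obtain ⟨X, hX, hcard⟩ := (isGreatest_egp (G := G)).1
  constructor
  · intro h
    have hXE : X = G.edgeSet := Set.eq_of_subset_of_ncard_le hX.1 (hcard.trans h).ge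
    exact hXE ▸ hX
  · intro h
    exact le_antisymm (hcard ▸ Set.ncard_le_ncard hX.1) (isGreatest_egp.2 ⟨_, h, rfl⟩)

end

theorem egp_eq_edgeCard_iff_diam_le_two_general {V : Type*} (G : SimpleGraph V)
    [Finite G.edgeSet] :
    G.egp = G.edgeSet.ncard ↔ ∀ u v, G.Reachable u v → G.dist u v ≤ 2 :=
  egp_eq_ncard_edgeSet_iff.trans isEdgeGPSet_edgeSet_iff_forall_dist_le_two

/-- For a finite connected graph `G` with at least one edge,
`gp_e(G) = m(G)` if and only if `diam(G) ≤ 2`. -/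
theorem egp_eq_edgeCard_iff_diam_le_two {V : Type*} [Fintype V] (G : SimpleGraph V)
    (hG : G.Connected) (hm : G.edgeSet.Nonempty) :
    G.egp = G.edgeSet.ncard ↔ G.diam ≤ 2 := by
  have := hG.nonempty
  simp only [egp_eq_edgeCard_iff_diam_le_two_general, hG.preconnected _ _, forall_const,
    diam_le_iff_forall_dist_le (SimpleGraph.connected_iff_ediam_ne_top.mp hG)]
end

section
/- Let G be a finite connected simple graph on at least 4 vertices with gp_e(G) = m(G) − 1 (so that diam(G) = 3). If e = uv is an edge that lies on every diametral path of G, and e is the middle edge of some diametral path x, u, v, y of G, then both u and v are cut-vertices of G. -/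
/-- A vertex `w` of `G` is a cut-vertex if the graph obtained by deleting `w`
is disconnected. -/
def SimpleGraph.IsCutVertex {V : Type*} (G : SimpleGraph V) (w : V) : Prop :=
  ¬ (SimpleGraph.induce {x : V | x ≠ w} G).Connected

section

variable {V : Type*} {G : SimpleGraph V} {u v x y : V}

theorem isCutVertex_of_forall_adj {S : Set V} (hx : x ∈ S) (hxu : x ≠ u) (hy : y ∉ S)
    (hyu : y ≠ u) (hS : ∀ a ∈ S, ∀ b ∉ S, G.Adj a b → a = u ∨ b = u) : G.IsCutVertex u := by
  intro hconn
  obtain ⟨p⟩ := hconn.preconnected ⟨x, hxu⟩ ⟨y, hyu⟩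
  obtain ⟨d, -, hfst, hsnd⟩ := p.exists_boundary_dart (Subtype.val ⁻¹' S) hx hy
  exact (hS _ hfst _ hsnd d.adj).elim d.fst.2 d.snd.2

theorem dist_add_dist_of_mem_support {p : G.Walk x y} (hp : p.length = G.dist x y)
    (hu : u ∈ p.support) : G.dist x u + G.dist u y = G.dist x y := by
  classical
  refine le_antisymm ?_ ((p.takeUntil u hu).reachable.dist_triangle_left y)
  calc G.dist x u + G.dist u y
      ≤ (p.takeUntil u hu).length + (p.dropUntil u hu).length :=
        add_le_add (SimpleGraph.dist_le _) (SimpleGraph.dist_le _)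
    _ = p.length := by rw [← SimpleGraph.Walk.length_append, p.take_spec]
    _ = G.dist x y := hp

theorem eq_of_adj_of_forall_mem_support {a b : V} (hG : G.Connected) (hab : G.Adj a b)
    (hb : G.dist b y + 1 = G.dist a y) (hu : G.dist u y = G.dist b y)
    (hmem : ∀ p : G.Walk a y, p.length = G.dist a y → u ∈ p.support) : b = u := by
  obtain ⟨q, hq⟩ := hG.exists_walk_length_eq_dist b y
  have hlen : (q.cons hab).length = G.dist a y := by
    rw [SimpleGraph.Walk.length_cons, hq, hb]
  have hu_mem : u ∈ q.support := by
    refine (List.mem_cons.1 (hmem (q.cons hab) hlen)).resolve_left ?_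
    rintro rfl
    omega
  have hbu : G.dist b u = 0 := by
    have := dist_add_dist_of_mem_support hq hu_mem
    omega
  exact hG.dist_eq_zero_iff.1 hbu

theorem isCutVertex_of_forall_farthest_mem_support (hG : G.Connected) (hxu : G.Adj x u)
    (huy : u ≠ y) (hmax : ∀ z, G.dist z y ≤ G.dist x y)
    (hmem : ∀ (z : V) (p : G.Walk z y), p.length = G.dist z y → G.dist z y = G.dist x y →
      u ∈ p.support) : G.IsCutVertex u := by
  have hdist : 1 + G.dist u y = G.dist x y := by
    obtain ⟨p, hp⟩ := hG.exists_walk_length_eq_dist x y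
    rw [← dist_add_dist_of_mem_support hp (hmem x p hp rfl), SimpleGraph.dist_eq_one_iff_adj.2 hxu]
  have hy : G.dist y y ≠ G.dist x y := by
    rw [SimpleGraph.dist_self]
    omega
  have hboundary (a b : V) (ha : G.dist a y = G.dist x y) (hb : G.dist b y ≠ G.dist x y)
      (hab : G.Adj a b) : b = u := by
    have hb_dist : G.dist b y + 1 = G.dist a y := by
      have htri : G.dist a y ≤ G.dist a b + G.dist b y := hG.dist_triangle
      rw [SimpleGraph.dist_eq_one_iff_adj.2 hab] at htri
      have := hmax b
      omega
    exact eq_of_adj_of_forall_mem_support hG hab hb_dist (by omega)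
      fun p hp => hmem a p hp ha
  exact isCutVertex_of_forall_adj (S := {z | G.dist z y = G.dist x y}) rfl hxu.ne hy huy.symm
    fun a ha b hb hab => .inr (hboundary a b ha hb hab)

theorem isCutVertex_of_forall_diametral_mem_support (hdiam : G.dist x y = G.diam)
    (hlt : 1 < G.dist x y) (hxu : G.Adj x u)
    (hmem : ∀ (a b : V) (p : G.Walk a b), p.length = G.dist a b → G.dist a b = G.diam →
      u ∈ p.support) : G.IsCutVertex u := by
  have : Nonempty V := ⟨x⟩
  have hfin : G.ediam ≠ ⊤ := SimpleGraph.ediam_ne_top_of_diam_ne_zero (by omega)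
  have huy : u ≠ y := by
    rintro rfl
    exact hlt.ne' (SimpleGraph.dist_eq_one_iff_adj.2 hxu)
  exact isCutVertex_of_forall_farthest_mem_support (SimpleGraph.connected_of_ediam_ne_top hfin)
    hxu huy (fun z => (SimpleGraph.dist_le_diam hfin).trans_eq hdiam.symm)
    fun z p hp hz => hmem z y p hp (hz.trans hdiam)

theorem cutVertices_of_middle_edge_general (hdiam : G.dist x y = G.diam) (hlt : 1 < G.dist x y)
    (hxu : G.Adj x u) (hvy : G.Adj v y)
    (hmem : ∀ (a b : V) (p : G.Walk a b), p.length = G.dist a b → G.dist a b = G.diam →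
      u ∈ p.support ∧ v ∈ p.support) :
    G.IsCutVertex u ∧ G.IsCutVertex v := by
  refine ⟨isCutVertex_of_forall_diametral_mem_support hdiam hlt hxu
    fun a b p hp hab => (hmem a b p hp hab).1, ?_⟩
  rw [SimpleGraph.dist_comm] at hdiam hlt
  exact isCutVertex_of_forall_diametral_mem_support hdiam hlt hvy.symm
    fun a b p hp hab => (hmem a b p hp hab).2

end

/-- Let `G` be a finite connected graph on at least 4 vertices with
`gp_e(G) = m(G) - 1`.  If `e = uv` is an edge lying on every diametral path of `G`, and
`e` is the middle edge of some diametral path `x, u, v, y` of `G`, then both `u` and `v`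
are cut-vertices of `G`. -/
theorem cutVertices_of_middle_edge {V : Type*} [Fintype V] (G : SimpleGraph V)
    (hG : G.Connected) (hn : 4 ≤ Fintype.card V)
    (h : G.egp = G.edgeSet.ncard - 1)
    (x u v y : V) (hxu : G.Adj x u) (huv : G.Adj u v) (hvy : G.Adj v y)
    (hxy : G.dist x y = 3) (hdiam : G.dist x y = G.diam)
    (he : ∀ (a b : V) (p : G.Walk a b), p.IsPath → p.length = G.dist a b →
      G.dist a b = G.diam → s(u, v) ∈ p.edges) :
    G.IsCutVertex u ∧ G.IsCutVertex v :=
  cutVertices_of_middle_edge_general hdiam (by omega) hxu hvy fun a b p hp hab =>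
    have huv_mem := he a b p (p.isPath_of_length_eq_dist hp) hp hab
    ⟨p.fst_mem_support_of_mem_edges huv_mem, p.snd_mem_support_of_mem_edges huv_mem⟩
end

section
/- Let H be a finite connected simple graph with diam(H) = 2 and let u be a vertex of H with deg_H(u) ≤ n(H) − 2, where n(H) is the number of vertices of H. Let G be the graph obtained from H by adding a new vertex adjacent only to u (a pendant edge at u). Then gp_e(G) = m(G) − 1. -/
/-- The graph obtained from `H` by attaching a pendant edge at the vertex `u`:
a new vertex (`none`) is adjacent exactly to `u`. -/
def SimpleGraph.addPendant {V : Type*} (H : SimpleGraph V) (u : V) : SimpleGraph (Option V) :=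
  SimpleGraph.fromRel (fun a b =>
    match a, b with
    | some x, some y => H.Adj x y
    | some x, none => x = u
    | _, _ => False)

/-!
Deleting a pendant edge `e` from `E(G)` leaves an edge general position set as soon as the vertices
other than the leaf are pairwise at distance at most `2`: a shortest path with more than two edges
has the leaf as an endpoint, hence uses `e` and at most two further edges. On the other hand `E(G)`
itself is in edge general position only if no distance in `G` exceeds `2`, and attaching a leaf at
`u` puts it at distance `3` from any vertex at distance `2` from `u`.
-/

open SimpleGraph

section Walk

variable {V : Type*} {G : SimpleGraph V} {x y : V}

lemma ncard_walk_edgeSet_le_length (p : G.Walk x y) : p.edgeSet.ncard ≤ p.length := by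
  classical
  rw [← p.coe_edges_toFinset, Set.ncard_coe_finset, ← p.length_edges]
  exact p.edges.toFinset_card_le

lemma ncard_walk_edgeSet_of_isPath {p : G.Walk x y} (hp : p.IsPath) :
    p.edgeSet.ncard = p.length := by
  classical
  rw [← p.coe_edges_toFinset, Set.ncard_coe_finset,
    List.toFinset_card_of_nodup hp.isTrail.edges_nodup, p.length_edges]

lemma finite_walk_edgeSet (p : G.Walk x y) : p.edgeSet.Finite :=
  p.edges.finite_toSet

lemma ncard_inter_walk_edgeSet_le_length (X : Set (Sym2 V)) (p : G.Walk x y) :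
    (X ∩ p.edgeSet).ncard ≤ p.length :=
  (Set.ncard_le_ncard Set.inter_subset_right (finite_walk_edgeSet p)).trans
    (ncard_walk_edgeSet_le_length p)

lemma ncard_inter_walk_edgeSet_lt_length {X : Set (Sym2 V)} {p : G.Walk x y} {e : Sym2 V}
    (hep : e ∈ p.edgeSet) (heX : e ∉ X) : (X ∩ p.edgeSet).ncard < p.length :=
  (Set.ncard_lt_ncard ⟨Set.inter_subset_right, fun h => heX (h hep).1⟩
    (finite_walk_edgeSet p)).trans_le (ncard_walk_edgeSet_le_length p)

end Walk

section EdgeGP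

variable {V : Type*} {G : SimpleGraph V}

lemma isEdgeGPSet_edgeSet_iff : G.IsEdgeGPSet G.edgeSet ↔ ∀ x y, G.dist x y ≤ 2 := by
  refine ⟨fun ⟨_, h⟩ x y => ?_, fun h => ⟨subset_rfl, fun x y p _ hp => ?_⟩⟩
  · by_cases hxy : G.Reachable x y
    · obtain ⟨p, hp, hlen⟩ := hxy.exists_path_of_dist
      have hsub : p.edgeSet ⊆ G.edgeSet := fun e he => p.edges_subset_edgeSet he
      calc G.dist x y = p.edgeSet.ncard := by rw [ncard_walk_edgeSet_of_isPath hp, hlen]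
        _ = (G.edgeSet ∩ p.edgeSet).ncard := by rw [Set.inter_eq_self_of_subset_right hsub]
        _ ≤ 2 := h x y p hp hlen
    · simp [dist_eq_zero_of_not_reachable hxy]
  · exact (ncard_inter_walk_edgeSet_le_length _ p).trans (hp ▸ h x y)

lemma egp_eq_ncard_edgeSet_sub_one (hfin : G.edgeSet.Finite) {e : Sym2 V} (he : e ∈ G.edgeSet)
    (hdel : G.IsEdgeGPSet (G.edgeSet \ {e})) (hall : ¬ G.IsEdgeGPSet G.edgeSet) :
    G.egp = G.edgeSet.ncard - 1 := by
  refine IsGreatest.csSup_eq ⟨⟨_, hdel, Set.ncard_sdiff_singleton_of_mem he⟩, ?_⟩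
  rintro n ⟨X, hX, rfl⟩
  have hssub : X ⊂ G.edgeSet := hX.1.ssubset_of_ne fun h => hall (h ▸ hX)
  exact Nat.le_sub_one_of_lt (Set.ncard_lt_ncard hssub hfin)

end EdgeGP

section Leaf

variable {V : Type*} {G : SimpleGraph V} {a b u x y : V}

lemma adj_iff_of_neighborSet_eq_singleton (ha : G.neighborSet a = {u}) : G.Adj a b ↔ b = u := by
  rw [← mem_neighborSet, ha, Set.mem_singleton_iff]

lemma edist_of_neighborSet_eq_singleton (ha : G.neighborSet a = {u}) (hx : x ≠ a) :
    G.edist a x = G.edist u x + 1 := by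
  have hau : G.Adj a u := (adj_iff_of_neighborSet_eq_singleton ha).2 rfl
  apply le_antisymm
  · calc G.edist a x ≤ G.edist a u + G.edist u x := G.edist_triangle
      _ = G.edist u x + 1 := by rw [edist_eq_one_iff_adj.2 hau, add_comm]
  · refine le_iInf fun p => ?_
    cases p with
    | nil => exact absurd rfl hx
    | @cons _ b _ hab q =>
      obtain rfl := (adj_iff_of_neighborSet_eq_singleton ha).1 hab
      simpa using add_le_add_left q.edist_le 1

lemma dist_of_neighborSet_eq_singleton (ha : G.neighborSet a = {u}) (hx : x ≠ a)
    (hux : G.Reachable u x) : G.dist a x = G.dist u x + 1 := by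
  rw [SimpleGraph.dist, edist_of_neighborSet_eq_singleton ha hx, ← hux.coe_dist_eq_edist]
  exact ENat.toNat_natCast _

lemma mem_walk_edgeSet_of_neighborSet_eq_singleton (ha : G.neighborSet a = {u})
    {p : G.Walk x y} (hp : ¬ p.Nil) (hap : a ∈ p.support) : s(a, u) ∈ p.edgeSet := by
  obtain ⟨e, hep, hae⟩ := (p.mem_support_iff_exists_mem_edges_of_not_nil hp).1 hap
  obtain ⟨b, rfl⟩ := hae
  obtain rfl := (adj_iff_of_neighborSet_eq_singleton ha).1 (p.adj_of_mem_edges hep)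
  exact hep

lemma dist_le_three_of_neighborSet_eq_singleton (ha : G.neighborSet a = {u})
    (hdist : ∀ x ≠ a, ∀ y ≠ a, G.dist x y ≤ 2) : G.dist x y ≤ 3 := by
  have hau : G.Adj a u := (adj_iff_of_neighborSet_eq_singleton ha).2 rfl
  have hleaf (z : V) : G.dist a z ≤ 3 := by
    obtain rfl | hz := eq_or_ne z a
    · simp
    by_cases huz : G.Reachable u z
    · rw [dist_of_neighborSet_eq_singleton ha hz huz]
      exact Nat.succ_le_succ (hdist u hau.ne' z hz)
    · have haz : ¬ G.Reachable a z := fun h => huz (hau.symm.reachable.trans h)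
      simp [dist_eq_zero_of_not_reachable haz]
  obtain rfl | hx := eq_or_ne x a
  · exact hleaf y
  obtain rfl | hy := eq_or_ne y a
  · exact dist_comm ▸ hleaf x
  exact (hdist x hx y hy).trans (by decide)

lemma isEdgeGPSet_edgeSet_sdiff_of_neighborSet_eq_singleton (ha : G.neighborSet a = {u})
    (hdist : ∀ x ≠ a, ∀ y ≠ a, G.dist x y ≤ 2) :
    G.IsEdgeGPSet (G.edgeSet \ {s(a, u)}) := by
  refine ⟨Set.sdiff_subset, fun x y p _ hp => ?_⟩
  by_cases hlen : p.length ≤ 2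
  · exact (ncard_inter_walk_edgeSet_le_length _ p).trans hlen
  have hap : a ∈ p.support := by
    by_contra h
    have hx : x ≠ a := fun hxa => h (hxa ▸ p.start_mem_support)
    have hy : y ≠ a := fun hya => h (hya ▸ p.end_mem_support)
    exact hlen (hp ▸ hdist x hx y hy)
  have hnil : ¬ p.Nil := Walk.not_nil_iff_lt_length.2 (by omega)
  have hlt : ((G.edgeSet \ {s(a, u)}) ∩ p.edgeSet).ncard < p.length :=
    ncard_inter_walk_edgeSet_lt_length
      (mem_walk_edgeSet_of_neighborSet_eq_singleton ha hnil hap) (by simp)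
  exact Nat.le_of_lt_succ
    (hlt.trans_le (hp ▸ dist_le_three_of_neighborSet_eq_singleton ha hdist))

end Leaf

lemma edist_map_le {V W : Type*} {G : SimpleGraph V} {G' : SimpleGraph W} {f : V → W}
    (hf : ∀ ⦃x y⦄, G.Adj x y → G'.edist (f x) (f y) ≤ 1) (x y : V) :
    G'.edist (f x) (f y) ≤ G.edist x y := by
  refine le_iInf fun p => ?_
  induction p with
  | nil => simp
  | @cons x z y h p ih =>
    calc G'.edist (f x) (f y) ≤ G'.edist (f x) (f z) + G'.edist (f z) (f y) := G'.edist_triangle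
      _ ≤ 1 + p.length := add_le_add (hf h) ih
      _ = (Walk.cons h p).length := by simp [add_comm]

lemma exists_ne_not_adj_of_ncard_neighborSet_lt {V : Type*} {G : SimpleGraph V} {u : V}
    (h : (G.neighborSet u).ncard + 1 < Nat.card V) : ∃ w, u ≠ w ∧ ¬ G.Adj u w := by
  have : Finite V := Nat.finite_of_card_ne_zero (by omega)
  have hlt : (insert u (G.neighborSet u)).ncard < (Set.univ : Set V).ncard := by
    rw [Set.ncard_univ]
    exact (Set.ncard_insert_le _ _).trans_lt h
  obtain ⟨w, -, hw⟩ := Set.exists_mem_notMem_of_ncard_lt_ncard hlt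
  exact ⟨w, fun huw => hw (.inl huw.symm), fun huw => hw (.inr huw)⟩

section AddPendant

variable {V : Type*} {H : SimpleGraph V} {u : V}

lemma addPendant_adj_some_some {x y : V} :
    (H.addPendant u).Adj (some x) (some y) ↔ H.Adj x y := by
  simpa [addPendant, H.adj_comm y x] using Adj.ne

lemma addPendant_adj_none {b : Option V} : (H.addPendant u).Adj none b ↔ b = some u := by
  cases b <;> simp [addPendant]

lemma mk_mem_edgeSet_addPendant : s(none, some u) ∈ (H.addPendant u).edgeSet :=
  (mem_edgeSet _).2 (addPendant_adj_none.2 rfl)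

lemma neighborSet_addPendant_none : (H.addPendant u).neighborSet none = {some u} :=
  Set.ext fun _ => addPendant_adj_none

lemma edist_addPendant_some_some (x y : V) :
    (H.addPendant u).edist (some x) (some y) = H.edist x y := by
  apply le_antisymm
  · exact edist_map_le (f := some)
      (fun _ _ h => (edist_eq_one_iff_adj.2 (addPendant_adj_some_some.2 h)).le) x y
  · -- Contracting the pendant edge onto `u` maps every edge to an edge or a point.
    refine edist_map_le (f := (Option.getD · u)) ?_ (some x) (some y)
    rintro (_ | a) (_ | b) h
    · simp
    · simp [Option.some.inj (addPendant_adj_none.1 h)]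
    · simp [Option.some.inj (addPendant_adj_none.1 h.symm)]
    · exact (edist_eq_one_iff_adj.2 (addPendant_adj_some_some.1 h)).le

lemma dist_addPendant_some_some (x y : V) :
    (H.addPendant u).dist (some x) (some y) = H.dist x y :=
  congrArg ENat.toNat (edist_addPendant_some_some x y)

lemma dist_addPendant_none_some {x : V} (hux : H.Reachable u x) :
    (H.addPendant u).dist none (some x) = H.dist u x + 1 := by
  have hux' : (H.addPendant u).Reachable (some u) (some x) := by
    rwa [← edist_ne_top_iff_reachable, edist_addPendant_some_some, edist_ne_top_iff_reachable]
  rw [dist_of_neighborSet_eq_singleton neighborSet_addPendant_none (Option.some_ne_none x) hux',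
    dist_addPendant_some_some]

lemma isEdgeGPSet_addPendant_edgeSet_sdiff (hdist : ∀ x y, H.dist x y ≤ 2) :
    (H.addPendant u).IsEdgeGPSet ((H.addPendant u).edgeSet \ {s(none, some u)}) := by
  refine isEdgeGPSet_edgeSet_sdiff_of_neighborSet_eq_singleton neighborSet_addPendant_none ?_
  rintro (_ | x) hx (_ | y) hy
  · simp
  · exact absurd rfl hx
  · exact absurd rfl hy
  · exact (dist_addPendant_some_some x y).trans_le (hdist x y)

lemma not_isEdgeGPSet_addPendant_edgeSet {w : V} (huw : 1 < H.dist u w) :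
    ¬ (H.addPendant u).IsEdgeGPSet (H.addPendant u).edgeSet := fun h => by
  have hle := isEdgeGPSet_edgeSet_iff.1 h none (some w)
  rw [dist_addPendant_none_some (.of_dist_ne_zero (by omega))] at hle
  omega

end AddPendant

/-- Let `H` be a finite connected graph with `diam(H) = 2` and let `u` be a
vertex of `H` with `deg_H(u) ≤ n(H) - 2`.  If `G` is obtained from `H` by attaching a
pendant edge at `u`, then `gp_e(G) = m(G) - 1`. -/
theorem egp_addPendant {V : Type*} [Fintype V] (H : SimpleGraph V)
    (hH : H.Connected) (hdiam : H.diam = 2) (u : V)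
    (hdeg : (H.neighborSet u).ncard ≤ Fintype.card V - 2) :
    (H.addPendant u).egp = (H.addPendant u).edgeSet.ncard - 1 := by
  have hdist (x y : V) : H.dist x y ≤ 2 :=
    hdiam ▸ dist_le_diam (ediam_ne_top_of_diam_ne_zero (by omega))
  -- This keeps the subtraction in `hdeg` from truncating.
  have hcard : 1 < Fintype.card V :=
    Fintype.one_lt_card_iff_nontrivial.2 (nontrivial_of_diam_ne_zero (G := H) (by omega))
  obtain ⟨w, hne, hnadj⟩ : ∃ w, u ≠ w ∧ ¬ H.Adj u w :=
    exists_ne_not_adj_of_ncard_neighborSet_lt (by rw [Nat.card_eq_fintype_card]; omega)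
  exact egp_eq_ncard_edgeSet_sub_one (Set.toFinite _) mk_mem_edgeSet_addPendant
    (isEdgeGPSet_addPendant_edgeSet_sdiff hdist)
    (not_isEdgeGPSet_addPendant_edgeSet (hH.one_lt_dist_of_ne_of_not_adj hne hnadj))
end

section
/- Let G be a finite connected simple graph with n(G) ≥ 4. Then gp_e(G) = m(G) − 1 if and only if G belongs to the family 𝒢₁ ∪ 𝒢₂, where: 𝒢₁ consists of all graphs obtained from a graph H with diam(H) = 2 by attaching a pendant edge to a vertex u of H with deg_H(u) ≤ n(H) − 2; and 𝒢₂ consists of all graphs obtained from the disjoint union of graphs G₀, G₁, G₂ (not necessarily connected, with G₁ and G₂ nonempty) and an edge x₁x₂ by adding all edges between {x₁, x₂} and the vertices of G₀, all edges between x₁ and the vertices of G₁, and all edges between x₂ and the vertices of G₂. -/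
/-- The graph obtained from the disjoint union of `G₀`, `G₁`, `G₂` and an edge `x₁x₂`
(here `x₁ = Sum.inr true`, `x₂ = Sum.inr false`) by joining both `x₁` and `x₂` to all
vertices of `G₀`, joining `x₁` to all vertices of `G₁`, and joining `x₂` to all
vertices of `G₂`. -/
def centralEdgeJoin {V₀ V₁ V₂ : Type*} (G₀ : SimpleGraph V₀) (G₁ : SimpleGraph V₁)
    (G₂ : SimpleGraph V₂) : SimpleGraph ((V₀ ⊕ V₁ ⊕ V₂) ⊕ Bool) :=
  SimpleGraph.fromRel (fun a b =>
    match a, b with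
    | Sum.inl (Sum.inl x), Sum.inl (Sum.inl y) => G₀.Adj x y
    | Sum.inl (Sum.inr (Sum.inl x)), Sum.inl (Sum.inr (Sum.inl y)) => G₁.Adj x y
    | Sum.inl (Sum.inr (Sum.inr x)), Sum.inl (Sum.inr (Sum.inr y)) => G₂.Adj x y
    | Sum.inl (Sum.inl _), Sum.inr _ => True
    | Sum.inl (Sum.inr (Sum.inl _)), Sum.inr b => b = true
    | Sum.inl (Sum.inr (Sum.inr _)), Sum.inr b => b = false
    | Sum.inr _, Sum.inr _ => True
    | _, _ => False)

/-- `G` belongs to the family `𝒢₁`: it is (isomorphic to) a graph obtained from a finite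
graph `H` with `diam(H) = 2` by attaching a pendant edge at a vertex `u` of `H` with
`deg_H(u) ≤ n(H) - 2`. -/
def InFamilyG1 {V : Type*} (G : SimpleGraph V) : Prop :=
  ∃ (W : Type) (_ : Fintype W) (H : SimpleGraph W) (u : W),
    H.diam = 2 ∧ (H.neighborSet u).ncard ≤ Fintype.card W - 2 ∧
      Nonempty (G ≃g H.addPendant u)

/-- `G` belongs to the family `𝒢₂`: it is (isomorphic to) a central-edge join of finite
graphs `G₀`, `G₁`, `G₂` (not necessarily connected) with `G₁` and `G₂` nonempty. -/
def InFamilyG2 {V : Type*} (G : SimpleGraph V) : Prop :=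
  ∃ (W₀ W₁ W₂ : Type) (_ : Fintype W₀) (_ : Fintype W₁) (_ : Fintype W₂)
    (_ : Nonempty W₁) (_ : Nonempty W₂)
    (G₀ : SimpleGraph W₀) (G₁ : SimpleGraph W₁) (G₂ : SimpleGraph W₂),
    Nonempty (G ≃g centralEdgeJoin G₀ G₁ G₂)

/-!
The equation `gp_e(G) = m(G) - 1` says that `E(G)` is not in general position while `E(G) \ {e}` is,
for some edge `e`. Counting the edges of geodesics other than `e`, this means that `G` has diameter
three and that every geodesic of length three contains `e`: the edge `e` is critical.

Let `e = xy` be critical. If an end of `e`, say `x`, has eccentricity three, it is a leaf: a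
geodesic that starts at another neighbour of `x` and ends at a vertex `q` with `d(x, q) = 3` would
either extend to or be a geodesic of length three avoiding `e`. Hence all distances in `G - x` are
at most two and `G` belongs to `𝒢₁`. Otherwise `e` is the middle edge of every geodesic of length
three, and therefore the property of being at distance three from a given vertex is preserved along
the edges of `G - {x, y}`. It follows that `{x, y}` dominates `G` and that adjacent vertices of
`G - {x, y}` have the same neighbours in `{x, y}`, so `G` belongs to `𝒢₂`. In both families the
distinguished edge is critical.
-/

open SimpleGraph

section Distance

variable {V W : Type*} {G : SimpleGraph V} {H : SimpleGraph W} {a b c d : V}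

theorem edist_le_two_iff : G.edist a b ≤ 2 ↔ a = b ∨ G.Adj a b ∨ ∃ z, G.Adj a z ∧ G.Adj z b := by
  rw [← not_lt, two_lt_edist_iff, Set.eq_empty_iff_forall_notMem]
  simp only [mem_commonNeighbors, G.adj_comm b]
  grind

theorem edist_le_two_of_adj (hab : G.Adj a b) : G.edist a b ≤ 2 :=
  edist_le_two_iff.2 (.inr (.inl hab))

theorem edist_le_two_of_adj_of_adj (hab : G.Adj a b) (hbc : G.Adj b c) : G.edist a c ≤ 2 :=
  edist_le_two_iff.2 (.inr (.inr ⟨b, hab, hbc⟩))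

theorem edist_le_add_one_of_adj (hab : G.Adj a b) : G.edist a c ≤ G.edist b c + 1 := by
  rw [add_comm, ← edist_eq_one_iff_adj.2 hab]
  exact SimpleGraph.edist_triangle

theorem edist_map_le_s8 (f : G →g H) (a b : V) : H.edist (f a) (f b) ≤ G.edist a b :=
  le_iInf fun p ↦ by simpa using (p.map f).edist_le

theorem edist_iso (φ : G ≃g H) (a b : V) : H.edist (φ a) (φ b) = G.edist a b :=
  (edist_map_le_s8 φ.toHom a b).antisymm <| by simpa using edist_map_le_s8 φ.symm.toHom (φ a) (φ b)

theorem ediam_eq_of_iso (φ : G ≃g H) : G.ediam = H.ediam :=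
  le_antisymm (ediam_le_of_edist_le fun a b ↦ edist_iso φ a b ▸ edist_le_ediam)
    (ediam_le_of_edist_le fun a b ↦ edist_iso φ.symm a b ▸ edist_le_ediam)

theorem length_eq_dist_iff (p : G.Walk a b) : p.length = G.dist a b ↔ p.length = G.edist a b := by
  rw [← p.reachable.coe_dist_eq_edist, Nat.cast_inj]

/-- `a b c d` is a geodesic of length three. -/
structure IsThreeGeodesic (G : SimpleGraph V) (a b c d : V) : Prop where
  adj_left : G.Adj a b
  adj_mid : G.Adj b c
  adj_right : G.Adj c d
  two_lt_edist : 2 < G.edist a d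

namespace IsThreeGeodesic

theorem reverse (h : IsThreeGeodesic G a b c d) : IsThreeGeodesic G d c b a :=
  ⟨h.adj_right.symm, h.adj_mid.symm, h.adj_left.symm, edist_comm (G := G) ▸ h.two_lt_edist⟩

theorem map (φ : G ≃g H) (h : IsThreeGeodesic G a b c d) :
    IsThreeGeodesic H (φ a) (φ b) (φ c) (φ d) :=
  ⟨φ.map_adj_iff.2 h.adj_left, φ.map_adj_iff.2 h.adj_mid, φ.map_adj_iff.2 h.adj_right,
    (edist_iso φ a d).symm ▸ h.two_lt_edist⟩

end IsThreeGeodesic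

theorem exists_isThreeGeodesic (h : G.edist a d = 3) : ∃ b c, IsThreeGeodesic G a b c d := by
  obtain ⟨p, hp⟩ := exists_walk_of_edist_eq_coe h
  match p, hp with
  | .cons hab (.cons hbc (.cons hcd .nil)), _ => exact ⟨_, _, hab, hbc, hcd, h ▸ by norm_num⟩

theorem exists_isThreeGeodesic_of_two_lt_edist (hG : G.ediam ≤ 3) (had : 2 < G.edist a d) :
    ∃ b c, IsThreeGeodesic G a b c d :=
  exists_isThreeGeodesic <| (edist_le_ediam.trans hG).antisymm (Order.add_one_le_of_lt had)

theorem ediam_eq_three_iff : G.ediam = 3 ↔ G.ediam ≤ 3 ∧ ∃ a d, 2 < G.edist a d := by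
  have hlt : (∃ a d, 2 < G.edist a d) ↔ 2 < G.ediam := by
    rw [← not_iff_not, not_lt, ediam_le_iff]
    simp only [not_exists, not_lt]
  rw [hlt]
  refine ⟨fun h ↦ ?_, fun h ↦ h.1.antisymm (Order.add_one_le_of_lt h.2)⟩
  rw [h]
  norm_num

end Distance

section EdgeGeneralPosition

variable {V : Type*} {G : SimpleGraph V} {X : Set (Sym2 V)}

section Finite

variable [Finite G.edgeSet]

theorem bddAbove_ncard_isEdgeGPSet :
    BddAbove {n | ∃ X : Set (Sym2 V), G.IsEdgeGPSet X ∧ X.ncard = n} := by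
  refine ⟨G.edgeSet.ncard, ?_⟩
  rintro _ ⟨X, hX, rfl⟩
  exact Set.ncard_le_ncard hX.1

theorem ncard_le_egp (hX : G.IsEdgeGPSet X) : X.ncard ≤ G.egp :=
  le_csSup bddAbove_ncard_isEdgeGPSet ⟨X, hX, rfl⟩

variable (G) in
theorem exists_isEdgeGPSet_ncard_eq_egp : ∃ X, G.IsEdgeGPSet X ∧ X.ncard = G.egp :=
  Nat.sSup_mem (s := {n | ∃ X, G.IsEdgeGPSet X ∧ X.ncard = n})
    ⟨0, ∅, ⟨Set.empty_subset _, by simp⟩, Set.ncard_empty _⟩ bddAbove_ncard_isEdgeGPSet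

theorem egp_eq_ncard_sub_one_iff_isEdgeGPSet (hE : G.edgeSet.Nonempty) :
    G.egp = G.edgeSet.ncard - 1 ↔
      ¬ G.IsEdgeGPSet G.edgeSet ∧ ∃ e ∈ G.edgeSet, G.IsEdgeGPSet (G.edgeSet \ {e}) := by
  have hpos : 0 < G.edgeSet.ncard := hE.ncard_pos
  obtain ⟨X, hX, hcard⟩ := exists_isEdgeGPSet_ncard_eq_egp G
  constructor
  · intro h
    have hdiff : (G.edgeSet \ X).ncard = 1 := by
      rw [Set.ncard_sdiff hX.1 ((Set.toFinite _).subset hX.1)]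
      omega
    obtain ⟨e, he⟩ := Set.ncard_eq_one.1 hdiff
    refine ⟨fun hE ↦ ?_, e, (he.ge rfl).1, ?_⟩
    · have := ncard_le_egp hE
      omega
    · rwa [← he, Set.sdiff_sdiff_cancel_left hX.1]
  · rintro ⟨hnot, e, he, hGP⟩
    have hlower := ncard_le_egp hGP
    rw [Set.ncard_sdiff_singleton_of_mem he] at hlower
    have hupper : X.ncard < G.edgeSet.ncard :=
      Set.ncard_lt_ncard (hX.1.ssubset_of_ne fun h ↦ hnot (h ▸ hX))
    omega

end Finite

theorem ncard_edges {u v : V} {p : G.Walk u v} (hp : p.IsPath) :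
    {e | e ∈ p.edges}.ncard = p.length := by
  classical
  rw [← p.length_edges, ← List.toFinset_card_of_nodup hp.isTrail.edges_nodup,
    ← Set.ncard_coe_finset, List.coe_toFinset]

theorem ncard_edgeSet_inter_edges {u v : V} {p : G.Walk u v} (hp : p.IsPath) :
    (G.edgeSet ∩ {e | e ∈ p.edges}).ncard = p.length := by
  have hsub : {e | e ∈ p.edges} ⊆ G.edgeSet := fun _ he ↦ p.edges_subset_edgeSet he
  rw [Set.inter_eq_self_of_subset_right hsub, ncard_edges hp]

theorem ncard_edgeSet_diff_singleton_inter_edges_le_two_iff {u v : V} {p : G.Walk u v}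
    (hp : p.IsPath) (e : Sym2 V) :
    ((G.edgeSet \ {e}) ∩ {e | e ∈ p.edges}).ncard ≤ 2 ↔
      p.length ≤ 3 ∧ (p.length = 3 → e ∈ p.edges) := by
  rw [Set.sdiff_inter_right_comm, ← ncard_edgeSet_inter_edges hp]
  by_cases he : e ∈ p.edges
  · have hmem : e ∈ G.edgeSet ∩ {e | e ∈ p.edges} := ⟨p.edges_subset_edgeSet he, he⟩
    rw [Set.ncard_sdiff_singleton_of_mem hmem]
    simp only [he, implies_true, and_true]
    omega
  · rw [Set.sdiff_singleton_eq_self fun h ↦ he h.2]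
    simp only [he, imp_false]
    omega

theorem isEdgeGPSet_edgeSet_iff_s8 (hG : G.Preconnected) :
    G.IsEdgeGPSet G.edgeSet ↔ G.ediam ≤ 2 := by
  constructor
  · rintro ⟨-, h⟩
    refine ediam_le_of_edist_le fun u v ↦ ?_
    obtain ⟨p, hp⟩ := (hG u v).exists_walk_length_eq_edist
    have hdist := (length_eq_dist_iff p).2 hp
    have hpath := p.isPath_of_length_eq_dist hdist
    rw [← hp]
    exact_mod_cast ncard_edgeSet_inter_edges hpath ▸ h u v p hpath hdist
  · refine fun h ↦ ⟨subset_rfl, fun u v p hpath hdist ↦ ?_⟩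
    rw [ncard_edgeSet_inter_edges hpath]
    exact_mod_cast ((length_eq_dist_iff p).1 hdist).trans_le (edist_le_ediam.trans h)

theorem isEdgeGPSet_edgeSet_diff_singleton_iff (hG : G.Preconnected) (e : Sym2 V) :
    G.IsEdgeGPSet (G.edgeSet \ {e}) ↔ G.ediam ≤ 3 ∧
      ∀ ⦃a b c d⦄, IsThreeGeodesic G a b c d → e = s(a, b) ∨ e = s(b, c) ∨ e = s(c, d) := by
  constructor
  · rintro ⟨-, h⟩
    have hgeod : ∀ ⦃u v⦄ (p : G.Walk u v), p.length = G.edist u v →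
        p.length ≤ 3 ∧ (p.length = 3 → e ∈ p.edges) := fun u v p hp ↦ by
      have hdist := (length_eq_dist_iff p).2 hp
      have hpath := p.isPath_of_length_eq_dist hdist
      exact (ncard_edgeSet_diff_singleton_inter_edges_le_two_iff hpath e).1 (h u v p hpath hdist)
    refine ⟨ediam_le_of_edist_le fun u v ↦ ?_, fun a b c d habcd ↦ ?_⟩
    · obtain ⟨p, hp⟩ := (hG u v).exists_walk_length_eq_edist
      rw [← hp]
      exact_mod_cast (hgeod p hp).1
    · let p : G.Walk a d := .cons habcd.adj_left (.cons habcd.adj_mid (.cons habcd.adj_right .nil))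
      have hp : p.length = G.edist a d :=
        le_antisymm (Order.add_one_le_of_lt habcd.two_lt_edist) p.edist_le
      simpa [p] using (hgeod p hp).2 rfl
  · rintro ⟨hdiam, hmem⟩
    refine ⟨Set.sdiff_subset, fun u v p hpath hdist ↦ ?_⟩
    rw [ncard_edgeSet_diff_singleton_inter_edges_le_two_iff hpath]
    have hp := (length_eq_dist_iff p).1 hdist
    refine ⟨by exact_mod_cast hp.trans_le (edist_le_ediam.trans hdiam), fun hlen ↦ ?_⟩
    have hfar : 2 < G.edist u v := by
      rw [← hp, hlen]
      norm_num
    match p, hlen with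
    | .cons hab (.cons hbc (.cons hcd .nil)), _ => simpa using hmem ⟨hab, hbc, hcd, hfar⟩

end EdgeGeneralPosition

section CriticalEdge

variable {V W : Type*} {G : SimpleGraph V} {H : SimpleGraph W}

/-- The graph `G` has diameter three and `e` lies on all its geodesics of length three. These are
the edges `e` for which `E(G) \ {e}`, but not `E(G)`, is an edge general position set. -/
structure IsCriticalEdge (G : SimpleGraph V) (e : Sym2 V) : Prop where
  ediam_eq_three : G.ediam = 3
  eq_or_eq_or_eq : ∀ ⦃a b c d⦄, IsThreeGeodesic G a b c d → e = s(a, b) ∨ e = s(b, c) ∨ e = s(c, d)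

namespace IsCriticalEdge

theorem mem_edgeSet {e : Sym2 V} (h : IsCriticalEdge G e) : e ∈ G.edgeSet := by
  obtain ⟨hle, a, d, had⟩ := ediam_eq_three_iff.1 h.ediam_eq_three
  obtain ⟨b, c, habcd⟩ := exists_isThreeGeodesic_of_two_lt_edist hle had
  obtain rfl | rfl | rfl := h.eq_or_eq_or_eq habcd
  exacts [habcd.adj_left, habcd.adj_mid, habcd.adj_right]

theorem map (φ : G ≃g H) {e : Sym2 V} (h : IsCriticalEdge G e) : IsCriticalEdge H (e.map φ) := by
  refine ⟨ediam_eq_of_iso φ ▸ h.ediam_eq_three, fun a b c d habcd ↦ ?_⟩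
  obtain rfl | rfl | rfl := h.eq_or_eq_or_eq (habcd.map φ.symm) <;> simp

end IsCriticalEdge

theorem egp_eq_ncard_sub_one_iff_exists_isCriticalEdge [Finite G.edgeSet] (hG : G.Preconnected)
    (hE : G.edgeSet.Nonempty) :
    G.egp = G.edgeSet.ncard - 1 ↔ ∃ e, IsCriticalEdge G e := by
  rw [egp_eq_ncard_sub_one_iff_isEdgeGPSet hE, isEdgeGPSet_edgeSet_iff_s8 hG, not_le]
  simp only [isEdgeGPSet_edgeSet_diff_singleton_iff hG]
  constructor
  · rintro ⟨hlt, e, -, hle, he⟩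
    exact ⟨e, hle.antisymm (Order.add_one_le_of_lt hlt), he⟩
  · rintro ⟨e, he⟩
    exact ⟨he.ediam_eq_three ▸ by norm_num, e, he.mem_edgeSet, he.ediam_eq_three.le,
      he.eq_or_eq_or_eq⟩

end CriticalEdge

section Structure

variable {V : Type*} {G : SimpleGraph V} {u v x y : V}

/-- Intrinsic form of the family `𝒢₁`: `v` is a leaf attached at `u`, some vertex is at distance
more than two from `v`, and all distances that do not involve `v` are at most two. As geodesics
between other vertices avoid a leaf, these are also the distances in `G - v`. -/
structure IsFarLeaf (G : SimpleGraph V) (v u : V) : Prop where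
  adj_iff : ∀ w, G.Adj v w ↔ w = u
  exists_far : ∃ q, 2 < G.edist v q
  edist_le_two : ∀ ⦃a b⦄, a ≠ v → b ≠ v → G.edist a b ≤ 2

/-- The private neighbours of `x` with respect to `y`: the neighbours of `x` other than `y` that are
not adjacent to `y`. -/
def privateNeighbors (G : SimpleGraph V) (x y : V) : Set V :=
  {w | w ≠ y ∧ G.Adj x w ∧ ¬ G.Adj y w}

/-- Intrinsic form of the family `𝒢₂`: the ends of the edge `xy` dominate the graph, both have
private neighbours, and adjacent vertices outside `{x, y}` have the same neighbours in `{x, y}`. -/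
structure IsCentralEdge (G : SimpleGraph V) (x y : V) : Prop where
  adj : G.Adj x y
  exists_adj : ∀ ⦃w⦄, w ∉ ({x, y} : Set V) → ∃ s ∈ ({x, y} : Set V), G.Adj s w
  nonempty_left : (privateNeighbors G x y).Nonempty
  nonempty_right : (privateNeighbors G y x).Nonempty
  adj_of_adj : ∀ ⦃a b s⦄, a ∉ ({x, y} : Set V) → b ∉ ({x, y} : Set V) → s ∈ ({x, y} : Set V) →
    G.Adj a b → G.Adj s a → G.Adj s b

/-- The graph `G` has diameter three and `e` is the middle edge of all its geodesics of length
three. -/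
structure IsMiddleEdge (G : SimpleGraph V) (e : Sym2 V) : Prop where
  ediam_eq_three : G.ediam = 3
  eq_mid : ∀ ⦃a b c d⦄, IsThreeGeodesic G a b c d → s(b, c) = e

namespace IsCriticalEdge

theorem mem_or_mem_of_mem {e : Sym2 V} (h : IsCriticalEdge G e) {a b c d z : V}
    (habcd : IsThreeGeodesic G a b c d) (hz : z ∈ e) : z = a ∨ z = b ∨ z = c ∨ z = d := by
  obtain rfl | rfl | rfl := h.eq_or_eq_or_eq habcd <;> grind

theorem eq_of_adj (h : IsCriticalEdge G s(v, u)) {q w : V} (hvq : 2 < G.edist v q)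
    (hvw : G.Adj v w) : w = u := by
  have hne : ∀ z, G.edist z q ≤ 2 → v ≠ z := fun z hz ↦ by
    rintro rfl
    exact hvq.not_ge hz
  by_contra hwu
  obtain hwq | hwq := le_or_gt (G.edist w q) 2
  · obtain rfl | hwq' | ⟨z, hwz, hzq⟩ := edist_le_two_iff.1 hwq
    · exact hne v (edist_le_two_of_adj hvw) rfl
    · exact hne v (edist_le_two_of_adj_of_adj hvw hwq') rfl
    · have hvz := hne z (edist_le_two_of_adj hzq)
      have hvq' := hne q (by simp)
      have := h.eq_or_eq_or_eq ⟨hvw, hwz, hzq, hvq⟩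
      grind [hvw.ne]
  · obtain ⟨b, c, hgeod⟩ := exists_isThreeGeodesic_of_two_lt_edist h.ediam_eq_three.le hwq
    obtain rfl | rfl | rfl | rfl := h.mem_or_mem_of_mem hgeod (Sym2.mem_mk_left v u)
    · exact hvw.ne rfl
    · exact hne v (edist_le_two_of_adj_of_adj hgeod.adj_mid hgeod.adj_right) rfl
    · exact hne v (edist_le_two_of_adj hgeod.adj_right) rfl
    · exact hne v (by simp) rfl

theorem isFarLeaf (h : IsCriticalEdge G s(v, u)) (hv : ¬ G.eccent v ≤ 2) : IsFarLeaf G v u := by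
  obtain ⟨q, hvq⟩ : ∃ q, 2 < G.edist v q := by simpa [eccent_le_iff] using hv
  have hleaf : ∀ w, G.Adj v w → w = u := fun w ↦ h.eq_of_adj hvq
  refine ⟨fun w ↦ ⟨hleaf w, fun hw ↦ hw ▸ h.mem_edgeSet⟩, ⟨q, hvq⟩, fun a b ha hb ↦ ?_⟩
  by_contra! hab
  obtain ⟨c, d, hgeod⟩ := exists_isThreeGeodesic_of_two_lt_edist h.ediam_eq_three.le hab
  obtain rfl | rfl | rfl | rfl := h.mem_or_mem_of_mem hgeod (Sym2.mem_mk_left v u)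
  · exact ha rfl
  · obtain rfl := (hleaf a hgeod.adj_left.symm).trans (hleaf d hgeod.adj_mid).symm
    exact hab.not_ge (edist_le_two_of_adj hgeod.adj_right)
  · obtain rfl := (hleaf c hgeod.adj_mid.symm).trans (hleaf b hgeod.adj_right).symm
    exact hab.not_ge (edist_le_two_of_adj hgeod.adj_left)
  · exact hb rfl

theorem isMiddleEdge (h : IsCriticalEdge G s(x, y)) (hx : G.eccent x ≤ 2) (hy : G.eccent y ≤ 2) :
    IsMiddleEdge G s(x, y) := by
  have hend : ∀ ⦃a b c d⦄, IsThreeGeodesic G a b c d → s(x, y) ≠ s(a, b) := by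
    intro a b c d hgeod he
    have ha : a ∈ s(x, y) := he ▸ Sym2.mem_mk_left a b
    obtain rfl | rfl := Sym2.mem_iff.1 ha
    · exact hgeod.two_lt_edist.not_ge ((eccent_le_iff _ _).1 hx d)
    · exact hgeod.two_lt_edist.not_ge ((eccent_le_iff _ _).1 hy d)
  refine ⟨h.ediam_eq_three, fun a b c d hgeod ↦ ?_⟩
  obtain he | he | he := h.eq_or_eq_or_eq hgeod
  · exact absurd he (hend hgeod)
  · exact he.symm
  · exact absurd (he.trans Sym2.eq_swap) (hend hgeod.reverse)

end IsCriticalEdge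

namespace IsMiddleEdge

variable {a b c d w : V}

theorem symm (h : IsMiddleEdge G s(x, y)) : IsMiddleEdge G s(y, x) :=
  Sym2.eq_swap ▸ h

theorem exists_isThreeGeodesic (h : IsMiddleEdge G s(x, y)) :
    ∃ a b, IsThreeGeodesic G a x y b := by
  obtain ⟨hle, a, d, had⟩ := ediam_eq_three_iff.1 h.ediam_eq_three
  obtain ⟨b, c, hgeod⟩ := exists_isThreeGeodesic_of_two_lt_edist hle had
  obtain ⟨rfl, rfl⟩ | ⟨rfl, rfl⟩ := Sym2.eq_iff.1 (h.eq_mid hgeod)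
  exacts [⟨a, d, hgeod⟩, ⟨d, a, hgeod.reverse⟩]

theorem two_lt_edist_of_adj (h : IsMiddleEdge G s(x, y)) (hab : 2 < G.edist a b) (hac : G.Adj a c)
    (hc : c ∉ ({x, y} : Set V)) : 2 < G.edist c b := by
  by_contra! hcb
  obtain rfl | hcb | ⟨z, hcz, hzb⟩ := edist_le_two_iff.1 hcb
  · exact hab.not_ge (edist_le_two_of_adj hac)
  · exact hab.not_ge (edist_le_two_of_adj_of_adj hac hcb)
  · have hcmem : c ∈ s(x, y) := h.eq_mid ⟨hac, hcz, hzb, hab⟩ ▸ Sym2.mem_mk_left c z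
    exact hc (by simpa using hcmem)

theorem exists_adj (h : IsMiddleEdge G s(x, y)) (hw : w ∉ ({x, y} : Set V)) :
    ∃ s ∈ ({x, y} : Set V), G.Adj s w := by
  by_contra! hnadj
  have hnbr : ∀ z, G.Adj w z → z ∉ ({x, y} : Set V) := fun z hwz hz ↦ hnadj z hz hwz.symm
  have hecc : ∀ t, G.edist w t ≤ 2 := by
    intro t
    by_contra! hwt
    obtain ⟨p, q, hgeod⟩ := exists_isThreeGeodesic_of_two_lt_edist h.ediam_eq_three.le hwt
    have hp : p ∈ s(x, y) := h.eq_mid hgeod ▸ Sym2.mem_mk_left p q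
    exact hnbr p hgeod.adj_left (by simpa using hp)
  obtain ⟨a, b, hgeod⟩ := h.exists_isThreeGeodesic
  refine (hecc b).not_gt ?_
  -- `w` is joined to `a` by a path that avoids `x` and `y`
  obtain rfl | hwa | ⟨c, hwc, hca⟩ := edist_le_two_iff.1 (hecc a)
  · exact hgeod.two_lt_edist
  · exact h.two_lt_edist_of_adj hgeod.two_lt_edist hwa.symm hw
  · have hcb := h.two_lt_edist_of_adj hgeod.two_lt_edist hca.symm (hnbr c hwc)
    exact h.two_lt_edist_of_adj hcb hwc.symm hw

theorem two_lt_edist_of_private (h : IsMiddleEdge G s(x, y)) (hgeod : IsThreeGeodesic G a x y b)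
    (hyd : G.Adj y d) (hdx : d ≠ x) (hxd : ¬ G.Adj x d) : 2 < G.edist a d := by
  have hya : ¬ G.Adj y a := fun hya ↦
    hgeod.two_lt_edist.not_ge (edist_le_two_of_adj_of_adj hya.symm hgeod.adj_right)
  have hd : d ∉ ({x, y} : Set V) := by simp [hdx, hyd.ne']
  by_contra! had
  -- `a` is joined to `d` by a path that avoids `x` and `y`
  have hdb : 2 < G.edist d b := by
    obtain rfl | had | ⟨z, haz, hzd⟩ := edist_le_two_iff.1 had
    · exact hgeod.two_lt_edist
    · exact h.two_lt_edist_of_adj hgeod.two_lt_edist had hd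
    · have hz : z ∉ ({x, y} : Set V) := by
        rintro (rfl | rfl)
        exacts [hxd hzd, hya haz.symm]
      exact h.two_lt_edist_of_adj (h.two_lt_edist_of_adj hgeod.two_lt_edist haz hz) hzd hd
  exact hdb.not_ge (edist_le_two_of_adj_of_adj hyd.symm hgeod.adj_right)

theorem adj_left_of_adj (h : IsMiddleEdge G s(x, y)) (hc : c ∉ ({x, y} : Set V))
    (hd : d ∉ ({x, y} : Set V)) (hcd : G.Adj c d) (hxc : G.Adj x c) : G.Adj x d := by
  by_contra hxd
  have hyd : G.Adj y d := by simpa [hxd] using h.exists_adj hd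
  obtain ⟨a, b, hgeod⟩ := h.exists_isThreeGeodesic
  have had : 2 < G.edist a d := h.two_lt_edist_of_private hgeod hyd (fun hdx ↦ hd (.inl hdx)) hxd
  have hca : 2 < G.edist c a := h.two_lt_edist_of_adj (edist_comm (G := G) ▸ had) hcd.symm hc
  exact hca.not_ge (edist_le_two_of_adj_of_adj hxc.symm hgeod.adj_left.symm)

theorem isCentralEdge (h : IsMiddleEdge G s(x, y)) : IsCentralEdge G x y := by
  have hprivate : ∀ ⦃a x y b⦄, IsThreeGeodesic G a x y b → a ∈ privateNeighbors G x y := by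
    intro a x y b hgeod
    refine ⟨?_, hgeod.adj_left.symm, fun hya ↦ hgeod.two_lt_edist.not_ge
      (edist_le_two_of_adj_of_adj hya.symm hgeod.adj_right)⟩
    rintro rfl
    exact hgeod.two_lt_edist.not_ge (edist_le_two_of_adj hgeod.adj_right)
  obtain ⟨a, b, hgeod⟩ := h.exists_isThreeGeodesic
  refine ⟨hgeod.adj_mid, fun w ↦ h.exists_adj, ⟨a, hprivate hgeod⟩, ⟨b, hprivate hgeod.reverse⟩, ?_⟩
  rintro c d s hc hd (rfl | rfl) hcd
  · exact h.adj_left_of_adj hc hd hcd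
  · rw [Set.pair_comm] at hc hd
    exact h.symm.adj_left_of_adj hc hd hcd

end IsMiddleEdge

theorem IsCriticalEdge.exists_isFarLeaf_or_exists_isCentralEdge {e : Sym2 V}
    (h : IsCriticalEdge G e) :
    (∃ v u, IsFarLeaf G v u) ∨ ∃ x y, IsCentralEdge G x y := by
  induction e with | _ x y
  by_cases hx : G.eccent x ≤ 2
  · by_cases hy : G.eccent y ≤ 2
    · exact .inr ⟨x, y, (h.isMiddleEdge hx hy).isCentralEdge⟩
    · exact .inl ⟨y, x, (Sym2.eq_swap ▸ h : IsCriticalEdge G s(y, x)).isFarLeaf hy⟩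
  · exact .inl ⟨x, y, h.isFarLeaf hx⟩

theorem IsFarLeaf.isCriticalEdge (h : IsFarLeaf G v u) : IsCriticalEdge G s(v, u) := by
  have hvu : G.Adj v u := (h.adj_iff u).2 rfl
  have hv : ∀ b, G.edist v b ≤ 3 := by
    intro b
    by_cases hb : b = v
    · simp [hb]
    · calc G.edist v b ≤ G.edist u b + 1 := edist_le_add_one_of_adj hvu
        _ ≤ 2 + 1 := by gcongr; exact h.edist_le_two hvu.ne' hb
        _ = 3 := by norm_num
  refine ⟨ediam_eq_three_iff.2 ⟨ediam_le_of_edist_le fun a b ↦ ?_, v, h.exists_far⟩, ?_⟩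
  · by_cases ha : a = v
    · exact ha ▸ hv b
    by_cases hb : b = v
    · exact hb ▸ edist_comm (G := G) ▸ hv a
    · exact (h.edist_le_two ha hb).trans (by norm_num)
  · intro a b c d hgeod
    by_cases ha : a = v
    · subst ha
      exact .inl ((h.adj_iff b).1 hgeod.adj_left ▸ rfl)
    by_cases hd : d = v
    · subst hd
      exact .inr (.inr ((h.adj_iff c).1 hgeod.adj_right.symm ▸ Sym2.eq_swap))
    · exact absurd (h.edist_le_two ha hd) hgeod.two_lt_edist.not_ge

namespace IsCentralEdge

variable {a b c d q s t : V}

theorem adj_of_mem_of_mem (h : IsCentralEdge G x y) (hs : s ∈ ({x, y} : Set V))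
    (ht : t ∈ ({x, y} : Set V)) (hst : s ≠ t) : G.Adj s t := by
  have := h.adj.symm
  have := h.adj
  grind

theorem edist_le_two_of_mem (h : IsCentralEdge G x y) (hs : s ∈ ({x, y} : Set V)) (q : V) :
    G.edist s q ≤ 2 := by
  have hpair : ∀ t ∈ ({x, y} : Set V), G.edist s t ≤ 1 := fun t ht ↦
    edist_le_one_iff_adj_or_eq.2 (or_iff_not_imp_right.2 (h.adj_of_mem_of_mem hs ht))
  by_cases hq : q ∈ ({x, y} : Set V)
  · exact (hpair q hq).trans (by norm_num)
  · obtain ⟨t, ht, htq⟩ := h.exists_adj hq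
    obtain rfl | hst := eq_or_ne s t
    · exact edist_le_two_of_adj htq
    · exact edist_le_two_of_adj_of_adj (h.adj_of_mem_of_mem hs ht hst) htq

theorem notMem_of_two_lt_edist (h : IsCentralEdge G x y) (had : 2 < G.edist a d) :
    a ∉ ({x, y} : Set V) :=
  fun ha ↦ had.not_ge (h.edist_le_two_of_mem ha d)

theorem ediam_le_three (h : IsCentralEdge G x y) : G.ediam ≤ 3 := by
  refine ediam_le_of_edist_le fun a d ↦ ?_
  by_cases ha : a ∈ ({x, y} : Set V)
  · exact (h.edist_le_two_of_mem ha d).trans (by norm_num)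
  · obtain ⟨s, hs, hsa⟩ := h.exists_adj ha
    calc G.edist a d ≤ G.edist s d + 1 := edist_le_add_one_of_adj hsa.symm
      _ ≤ 2 + 1 := by gcongr; exact h.edist_le_two_of_mem hs d
      _ = 3 := by norm_num

theorem exists_two_lt_edist (h : IsCentralEdge G x y) : ∃ a b, 2 < G.edist a b := by
  obtain ⟨a, hay, hxa, hya⟩ := h.nonempty_left
  obtain ⟨b, hbx, hyb, hxb⟩ := h.nonempty_right
  have ha : a ∉ ({x, y} : Set V) := by simp [hxa.ne', hay]
  have hb : b ∉ ({x, y} : Set V) := by simp [hyb.ne', hbx]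
  have hx : x ∈ ({x, y} : Set V) := .inl rfl
  refine ⟨a, b, not_le.1 fun hab ↦ hxb ?_⟩
  obtain rfl | hab | ⟨z, haz, hzb⟩ := edist_le_two_iff.1 hab
  · exact hxa
  · exact h.adj_of_adj ha hb hx hab hxa
  · have hz : z ∉ ({x, y} : Set V) := by
      rintro (rfl | rfl)
      exacts [hxb hzb, hya haz.symm]
    exact h.adj_of_adj hz hb hx hzb (h.adj_of_adj ha hz hx haz hxa)

theorem mem_of_isThreeGeodesic (h : IsCentralEdge G x y) (hgeod : IsThreeGeodesic G a b c d) :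
    b ∈ ({x, y} : Set V) := by
  obtain ⟨hab, hbc, hcd, had⟩ := hgeod
  have ha := h.notMem_of_two_lt_edist had
  have hd := h.notMem_of_two_lt_edist (edist_comm (G := G) ▸ had)
  by_contra hb
  by_cases hc : c ∈ ({x, y} : Set V)
  · have hca : G.Adj c a := h.adj_of_adj hb ha hc hab.symm hbc.symm
    exact had.not_ge (edist_le_two_of_adj_of_adj hca.symm hcd)
  · obtain ⟨s, hs, hsa⟩ := h.exists_adj ha
    have hsb : G.Adj s b := h.adj_of_adj ha hb hs hab hsa
    have hsc : G.Adj s c := h.adj_of_adj hb hc hs hbc hsb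
    have hsd : G.Adj s d := h.adj_of_adj hc hd hs hcd hsc
    exact had.not_ge (edist_le_two_of_adj_of_adj hsa.symm hsd)

theorem isCriticalEdge (h : IsCentralEdge G x y) : IsCriticalEdge G s(x, y) := by
  refine ⟨ediam_eq_three_iff.2 ⟨h.ediam_le_three, h.exists_two_lt_edist⟩, ?_⟩
  intro a b c d hgeod
  have hb := h.mem_of_isThreeGeodesic hgeod
  have hc := h.mem_of_isThreeGeodesic hgeod.reverse
  have hbc := hgeod.adj_mid.ne
  refine .inr (.inl (Sym2.eq_iff.2 ?_))
  grind

end IsCentralEdge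

end Structure

section Pendant

variable {V : Type*} {G : SimpleGraph V} {u v a b q : V}

theorem ediam_eq_two_iff :
    G.ediam = 2 ↔ (∀ a b, G.edist a b ≤ 2) ∧ ∃ a b, a ≠ b ∧ ¬ G.Adj a b := by
  have hlt : (∃ a b, a ≠ b ∧ ¬ G.Adj a b) ↔ 1 < G.ediam := by
    rw [← not_iff_not, not_lt, ediam_le_iff]
    simp only [edist_le_one_iff_adj_or_eq]
    grind
  rw [hlt, ← ediam_le_iff]
  refine ⟨fun h ↦ ?_, fun h ↦ h.1.antisymm (Order.add_one_le_of_lt h.2)⟩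
  rw [h]
  norm_num

theorem diam_eq_two_iff :
    G.diam = 2 ↔ (∀ a b, G.edist a b ≤ 2) ∧ ∃ a b, a ≠ b ∧ ¬ G.Adj a b := by
  rw [← ediam_eq_two_iff, diam, ENat.toNat_eq_iff two_ne_zero, Nat.cast_ofNat]

theorem ncard_neighborSet_le_card_sub_two_iff [Fintype V] [Nontrivial V] :
    (G.neighborSet u).ncard ≤ Fintype.card V - 2 ↔ ¬ G.IsUniversal u := by
  classical
  have hcard : 1 < Fintype.card V := Fintype.one_lt_card
  rw [← degree_lt_card_sub_one, ← Set.fintypeCard_eq_ncard, card_neighborSet_eq_degree]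
  omega

theorem two_lt_edist_iff_of_adj_iff (hv : ∀ w, G.Adj v w ↔ w = u) :
    2 < G.edist v q ↔ q ≠ v ∧ q ≠ u ∧ ¬ G.Adj u q := by
  rw [← not_iff_not, not_lt, edist_le_two_iff]
  simp only [hv]
  grind

theorem addPendant_adj_some_some_s8 : (G.addPendant u).Adj (some a) (some b) ↔ G.Adj a b := by
  simp only [addPendant, fromRel_adj, ne_eq, Option.some.injEq, G.adj_comm b a, or_self]
  exact and_iff_right_of_imp Adj.ne

theorem addPendant_adj_some_none : (G.addPendant u).Adj (some a) none ↔ a = u := by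
  simp [addPendant]

theorem addPendant_adj_none_iff (w : Option V) : (G.addPendant u).Adj none w ↔ w = some u := by
  cases w with
  | none => simp
  | some a => rw [adj_comm, addPendant_adj_some_none, Option.some_inj]

theorem isFarLeaf_addPendant [Fintype V] (hdiam : G.diam = 2)
    (hdeg : (G.neighborSet u).ncard ≤ Fintype.card V - 2) :
    IsFarLeaf (G.addPendant u) none (some u) := by
  have : Nontrivial V := nontrivial_of_diam_ne_zero (hdiam ▸ two_ne_zero)
  obtain ⟨q, huq, hq⟩ : ∃ q, u ≠ q ∧ ¬ G.Adj u q := by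
    simpa [IsUniversal] using ncard_neighborSet_le_card_sub_two_iff.1 hdeg
  refine ⟨addPendant_adj_none_iff, ⟨some q, ?_⟩, ?_⟩
  · rw [two_lt_edist_iff_of_adj_iff addPendant_adj_none_iff, addPendant_adj_some_some_s8]
    exact ⟨by simp, by simpa using huq.symm, hq⟩
  · let f : G →g G.addPendant u := ⟨some, addPendant_adj_some_some_s8.2⟩
    rintro (_ | a) (_ | b) ha hb
    any_goals contradiction
    exact (edist_map_le_s8 f a b).trans ((diam_eq_two_iff.1 hdiam).1 a b)

theorem nonempty_iso_addPendant (hv : ∀ w, G.Adj v w ↔ w = u) (huv : u ≠ v) :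
    Nonempty (G ≃g (G.comap ((↑) : {w // w ≠ v} → V)).addPendant ⟨u, huv⟩) := by
  classical
  refine ⟨Iso.symm ⟨Equiv.optionSubtypeNe v, ?_⟩⟩
  rintro (_ | a) (_ | b)
  · simp
  · simp [addPendant_adj_none_iff, hv, Subtype.ext_iff]
  · simp [addPendant_adj_some_none, G.adj_comm _ v, hv, Subtype.ext_iff]
  · simp [addPendant_adj_some_some_s8]

namespace IsFarLeaf

theorem ne (h : IsFarLeaf G v u) : u ≠ v :=
  ((h.adj_iff u).2 rfl).ne'

theorem exists_not_adj (h : IsFarLeaf G v u) : ∃ q, q ≠ v ∧ q ≠ u ∧ ¬ G.Adj u q := by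
  simpa only [two_lt_edist_iff_of_adj_iff h.adj_iff] using h.exists_far

theorem edist_comap_le_two (h : IsFarLeaf G v u) (a b : {w // w ≠ v}) :
    (G.comap ((↑) : {w // w ≠ v} → V)).edist a b ≤ 2 := by
  obtain hab | hab | ⟨z, haz, hzb⟩ := edist_le_two_iff.1 (h.edist_le_two a.2 b.2)
  · simp [Subtype.ext hab]
  · exact edist_le_two_of_adj (by simpa using hab)
  · by_cases hz : z = v
    · subst hz
      have hab : a = b := Subtype.ext <|
        ((h.adj_iff a).1 haz.symm).trans ((h.adj_iff b).1 hzb).symm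
      simp [hab]
    · let z' : {w // w ≠ v} := ⟨z, hz⟩
      exact edist_le_two_of_adj_of_adj (comap_adj.2 haz : (G.comap _).Adj a z')
        (comap_adj.2 hzb : (G.comap _).Adj z' b)

theorem inFamilyG1 {V : Type} [Finite V] {G : SimpleGraph V} {v u : V} (h : IsFarLeaf G v u) :
    InFamilyG1 G := by
  obtain ⟨q, hqv, hqu, huq⟩ := h.exists_not_adj
  let u' : {w // w ≠ v} := ⟨u, h.ne⟩
  let q' : {w // w ≠ v} := ⟨q, hqv⟩
  have hne : q' ≠ u' := fun he ↦ hqu (congrArg Subtype.val he)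
  have := Fintype.ofFinite {w // w ≠ v}
  have : Nontrivial {w // w ≠ v} := ⟨q', u', hne⟩
  refine ⟨{w // w ≠ v}, inferInstance, G.comap (↑), u', ?_, ?_,
    nonempty_iso_addPendant h.adj_iff h.ne⟩
  · exact diam_eq_two_iff.2 ⟨h.edist_comap_le_two, u', q', hne.symm, huq⟩
  · exact ncard_neighborSet_le_card_sub_two_iff.2 fun hu ↦ huq (hu hne.symm)

end IsFarLeaf

end Pendant

section Central

theorem isCentralEdge_centralEdgeJoin {V₀ V₁ V₂ : Type*} [Nonempty V₁] [Nonempty V₂]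
    (G₀ : SimpleGraph V₀) (G₁ : SimpleGraph V₁) (G₂ : SimpleGraph V₂) :
    IsCentralEdge (centralEdgeJoin G₀ G₁ G₂) (.inr true) (.inr false) where
  adj := by simp [centralEdgeJoin]
  exists_adj := by rintro ((_ | _ | _) | (_ | _)) <;> simp [centralEdgeJoin]
  nonempty_left := ⟨.inl (.inr (.inl (Classical.arbitrary V₁))), by
    simp [privateNeighbors, centralEdgeJoin]⟩
  nonempty_right := ⟨.inl (.inr (.inr (Classical.arbitrary V₂))), by
    simp [privateNeighbors, centralEdgeJoin]⟩
  adj_of_adj := by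
    rintro ((_ | _ | _) | (_ | _)) ((_ | _ | _) | (_ | _)) _ ha hb (rfl | rfl) <;>
      simp_all [centralEdgeJoin]

variable {V : Type*} {G : SimpleGraph V} {x y : V}

/-- The vertices of the central-edge join built from the common neighbours of `x` and `y`, the
private neighbours of `x` and those of `y`, read as vertices of `G`. -/
def joinVertex (G : SimpleGraph V) (x y : V) :
    (G.commonNeighbors x y ⊕ privateNeighbors G x y ⊕ privateNeighbors G y x) ⊕ Bool → V :=
  Sum.elim (Sum.elim (↑) (Sum.elim (↑) (↑))) fun b ↦ bif b then x else y

namespace IsCentralEdge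

theorem joinVertex_injective (h : IsCentralEdge G x y) : (joinVertex G x y).Injective := by
  have hne := h.adj.ne
  rintro ((⟨a, ha⟩ | ⟨a, ha⟩ | ⟨a, ha⟩) | (_ | _)) ((⟨b, hb⟩ | ⟨b, hb⟩ | ⟨b, hb⟩) | (_ | _)) hab <;>
    simp only [joinVertex, Sum.elim_inl, Sum.elim_inr, cond_true, cond_false] at hab <;>
    grind [privateNeighbors, mem_commonNeighbors, Adj.ne]

theorem joinVertex_surjective (h : IsCentralEdge G x y) : (joinVertex G x y).Surjective := by
  intro w
  by_cases hwx : w = x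
  · exact ⟨.inr true, hwx.symm⟩
  by_cases hwy : w = y
  · exact ⟨.inr false, hwy.symm⟩
  by_cases hx : G.Adj x w
  · by_cases hy : G.Adj y w
    · exact ⟨.inl (.inl ⟨w, hx, hy⟩), rfl⟩
    · exact ⟨.inl (.inr (.inl ⟨w, hwy, hx, hy⟩)), rfl⟩
  · have hy : G.Adj y w := by simpa [hx] using h.exists_adj (w := w) (by simp [hwx, hwy])
    exact ⟨.inl (.inr (.inr ⟨w, hwx, hy, hx⟩)), rfl⟩

theorem adj_joinVertex_iff (h : IsCentralEdge G x y)
    (s t : (G.commonNeighbors x y ⊕ privateNeighbors G x y ⊕ privateNeighbors G y x) ⊕ Bool) :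
    G.Adj (joinVertex G x y s) (joinVertex G x y t) ↔
      (centralEdgeJoin (G.induce (G.commonNeighbors x y)) (G.induce (privateNeighbors G x y))
        (G.induce (privateNeighbors G y x))).Adj s t := by
  have hadj := h.adj
  have hsame := h.adj_of_adj
  have hcomm := G.adj_comm
  rw [centralEdgeJoin, fromRel_adj, ← h.joinVertex_injective.ne_iff]
  revert s t
  rintro ((⟨a, ha⟩ | ⟨a, ha⟩ | ⟨a, ha⟩) | (_ | _)) ((⟨b, hb⟩ | ⟨b, hb⟩ | ⟨b, hb⟩) | (_ | _)) <;>
    simp only [joinVertex, Sum.elim_inl, Sum.elim_inr, cond_true, cond_false, comap_adj,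
      Function.Embedding.subtype_apply] <;>
    grind [privateNeighbors, mem_commonNeighbors, Adj.ne, Adj.symm]

theorem inFamilyG2 {V : Type} [Finite V] {G : SimpleGraph V} {x y : V} (h : IsCentralEdge G x y) :
    InFamilyG2 G :=
  ⟨_, _, _, .ofFinite _, .ofFinite _, .ofFinite _, h.nonempty_left.to_subtype,
    h.nonempty_right.to_subtype, _, _, _,
    ⟨Iso.symm ⟨.ofBijective _ ⟨h.joinVertex_injective, h.joinVertex_surjective⟩,
      h.adj_joinVertex_iff _ _⟩⟩⟩

end IsCentralEdge

end Central

section Families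

variable {V W : Type*} {G : SimpleGraph V} {H : SimpleGraph W}

theorem InFamilyG1.of_iso (φ : G ≃g H) (h : InFamilyG1 H) : InFamilyG1 G := by
  obtain ⟨W', hW', H', u, hdiam, hdeg, ⟨ψ⟩⟩ := h
  exact ⟨W', hW', H', u, hdiam, hdeg, ⟨φ.trans ψ⟩⟩

theorem InFamilyG2.of_iso (φ : G ≃g H) (h : InFamilyG2 H) : InFamilyG2 G := by
  obtain ⟨W₀, W₁, W₂, i₀, i₁, i₂, n₁, n₂, G₀, G₁, G₂, ⟨ψ⟩⟩ := h
  exact ⟨W₀, W₁, W₂, i₀, i₁, i₂, n₁, n₂, G₀, G₁, G₂, ⟨φ.trans ψ⟩⟩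

theorem InFamilyG1.exists_isCriticalEdge (h : InFamilyG1 G) : ∃ e, IsCriticalEdge G e := by
  obtain ⟨W, _, H, u, hdiam, hdeg, ⟨φ⟩⟩ := h
  exact ⟨_, (isFarLeaf_addPendant hdiam hdeg).isCriticalEdge.map φ.symm⟩

theorem InFamilyG2.exists_isCriticalEdge (h : InFamilyG2 G) : ∃ e, IsCriticalEdge G e := by
  obtain ⟨W₀, W₁, W₂, _, _, _, _, _, G₀, G₁, G₂, ⟨φ⟩⟩ := h
  exact ⟨_, (isCentralEdge_centralEdgeJoin G₀ G₁ G₂).isCriticalEdge.map φ.symm⟩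

theorem IsCriticalEdge.inFamilyG1_or_inFamilyG2 [Finite V] {e : Sym2 V} (h : IsCriticalEdge G e) :
    InFamilyG1 G ∨ InFamilyG2 G := by
  have := Fintype.ofFinite V
  -- the families only contain graphs on types in `Type`, so `G` is first moved to `Fin n`
  let φ := G.overFinIso rfl
  obtain ⟨v, u, hvu⟩ | ⟨x, y, hxy⟩ := (h.map φ).exists_isFarLeaf_or_exists_isCentralEdge
  · exact .inl (hvu.inFamilyG1.of_iso φ)
  · exact .inr (hxy.inFamilyG2.of_iso φ)

end Families

/-- For a finite connected graph `G` on at least 4 vertices,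
`gp_e(G) = m(G) - 1` if and only if `G ∈ 𝒢₁ ∪ 𝒢₂`. -/
theorem egp_eq_edgeCard_sub_one_iff {V : Type*} [Fintype V] (G : SimpleGraph V)
    (hG : G.Connected) (hn : 4 ≤ Fintype.card V) :
    G.egp = G.edgeSet.ncard - 1 ↔ InFamilyG1 G ∨ InFamilyG2 G := by
  have : Nontrivial V := Fintype.one_lt_card_iff_nontrivial.1 (by omega)
  obtain ⟨a⟩ := hG.nonempty
  obtain ⟨b, hab⟩ := hG.preconnected.exists_adj_of_nontrivial a
  rw [egp_eq_ncard_sub_one_iff_exists_isCriticalEdge hG.preconnected ⟨s(a, b), hab⟩]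
  constructor
  · rintro ⟨e, he⟩
    exact he.inFamilyG1_or_inFamilyG2
  · rintro (h | h)
    exacts [h.exists_isCriticalEdge, h.exists_isCriticalEdge]
end

section
/- Let G be a finite connected simple graph with m(G) ≥ 2. Then gp_e(G) = 2 if and only if G is a path graph. -/
/-!
Call an edge set *geodesic* if a single shortest path traverses it. Both sides of the equivalence
say that the whole edge set of `G` is geodesic.

If `gp_e(G) ≤ 2` and `G` has at least three edges, then any three edges are traversed by a shortest
path, and hence, for an edge `uu'` and vertices `x`, `y`, the four vertices `u, u', x, y` can be
placed isometrically on a half-line. Let `u, v` be at maximal distance. Then `u` is an end of every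
such placement of `u, u', x, v`, so `u'` lies between `u` and every vertex `x ≠ u`. Consequently `u`
is never strictly between two vertices `x, y`: a detour through `u` wastes two steps at `uu'`.
So all of `G` is placed isometrically on a half-line starting at `u`, and a shortest path from
`u` to `v` visits every vertex.

A connected graph with exactly two edges is not complete, so a shortest path between two vertices at
maximal distance has length at least two and traverses both edges.
-/

namespace EdgeGeneralPosition

open SimpleGraph

variable {V : Type*} {G : SimpleGraph V}

section Geodesics

variable {a b x y : V} {p : G.Walk a b}

lemma dist_add_dist_of_mem_support (hp : p.length = G.dist a b) (hx : x ∈ p.support) :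
    G.dist a x + G.dist x b = G.dist a b := by
  classical
  rw [← length_eq_dist_of_subwalk hp (p.isSubwalk_takeUntil hx),
    ← length_eq_dist_of_subwalk hp (p.isSubwalk_dropUntil hx), ← hp, ← Walk.length_append,
    p.take_spec hx]

lemma dist_getVert_of_length_eq_dist (hp : p.length = G.dist a b) {i : ℕ} (hi : i ≤ p.length) :
    G.dist a (p.getVert i) = i := by
  rw [← length_eq_dist_of_subwalk hp (p.isSubwalk_take i), p.take_length, min_eq_left hi]

lemma getVert_dist_of_length_eq_dist (hp : p.length = G.dist a b) (hx : x ∈ p.support) :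
    p.getVert (G.dist a x) = x := by
  obtain ⟨i, rfl, hi⟩ := Walk.mem_support_iff_exists_getVert.1 hx
  rw [dist_getVert_of_length_eq_dist hp hi]

lemma mk_mem_edges_of_dist_succ (hp : p.length = G.dist a b) (hx : x ∈ p.support)
    (hy : y ∈ p.support) (hxy : G.dist a x + 1 = G.dist a y) : s(x, y) ∈ p.edges := by
  refine p.mk_mem_edges_iff_exists.2 ⟨G.dist a x, ?_, ?_⟩
  · have := dist_add_dist_of_mem_support hp hy
    omega
  · rw [hxy, getVert_dist_of_length_eq_dist hp hx, getVert_dist_of_length_eq_dist hp hy]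

end Geodesics

/-- The vertices in `S` are placed isometrically on a half-line by their distance to `a`: of any two
of them, the one nearer to `a` lies on a shortest path from `a` to the other. -/
def AlignedFrom (G : SimpleGraph V) (a : V) (S : Set V) : Prop :=
  ∀ x ∈ S, ∀ y ∈ S, G.dist a x + G.dist x y = G.dist a y ∨ G.dist a y + G.dist y x = G.dist a x

lemma alignedFrom_support {a b : V} {p : G.Walk a b} (hp : p.length = G.dist a b) :
    AlignedFrom G a {x | x ∈ p.support} := by
  classical
  intro x hx y hy
  rcases (Walk.mem_support_append_iff _ _).1 ((p.take_spec hy).symm ▸ hx) with hx' | hx'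
  · exact Or.inl (dist_add_dist_of_mem_support
      (length_eq_dist_of_subwalk hp (p.isSubwalk_takeUntil hy)) hx')
  · have hyxb := dist_add_dist_of_mem_support
      (length_eq_dist_of_subwalk hp (p.isSubwalk_dropUntil hy)) hx'
    have haxb := dist_add_dist_of_mem_support hp hx
    have hayb := dist_add_dist_of_mem_support hp hy
    omega

namespace AlignedFrom

variable {a u v x y : V} {S T : Set V}

lemma mono (h : AlignedFrom G a T) (hST : S ⊆ T) : AlignedFrom G a S :=
  fun x hx y hy => h x (hST hx) y (hST hy)

lemma dist_add_dist_trichotomy (h : AlignedFrom G a S) (hu : u ∈ S) (hx : x ∈ S) (hy : y ∈ S) :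
    G.dist u x + G.dist x y = G.dist u y ∨ G.dist u y + G.dist y x = G.dist u x ∨
      G.dist x u + G.dist u y = G.dist x y := by
  have hux := h u hu x hx
  have huy := h u hu y hy
  have hxy := h x hx y hy
  simp only [dist_comm (u := x) (v := u), dist_comm (u := y)] at hux huy hxy ⊢
  omega

lemma dist_add_dist_of_le (h : AlignedFrom G a S) (hx : x ∈ S) (hy : y ∈ S)
    (hxy : G.dist a x ≤ G.dist a y) : G.dist a x + G.dist x y = G.dist a y := by
  have := h x hx y hy
  rw [dist_comm (u := y)] at this
  omega

lemma of_dist_max (h : AlignedFrom G a S) (hu : u ∈ S) (hv : v ∈ S)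
    (hmax : ∀ x ∈ S, ∀ y ∈ S, G.dist x y ≤ G.dist u v) : AlignedFrom G u S := by
  intro x hx y hy
  have hxy := h x hx y hy
  rcases le_total (G.dist a u) (G.dist a v) with huv | hvu
  · have u_nearest : ∀ z ∈ S, G.dist a u + G.dist u z = G.dist a z := by
      intro z hz
      refine h.dist_add_dist_of_le hu hz (not_lt.1 fun hzu => ?_)
      have hzv := h.dist_add_dist_of_le hz hv (hzu.le.trans huv)
      have huv := h.dist_add_dist_of_le hu hv huv
      have := hmax z hz v hv
      omega
    have := u_nearest x hx
    have := u_nearest y hy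
    omega
  · have u_farthest : ∀ z ∈ S, G.dist a z + G.dist z u = G.dist a u := by
      intro z hz
      refine h.dist_add_dist_of_le hz hu (not_lt.1 fun huz => ?_)
      have hvz := h.dist_add_dist_of_le hv hz (hvu.trans huz.le)
      have hvu := h.dist_add_dist_of_le hv hu hvu
      have := hmax v hv z hz
      rw [dist_comm (u := u)] at this
      omega
    have hxu := u_farthest x hx
    have hyu := u_farthest y hy
    rw [dist_comm (v := u)] at hxu hyu
    rw [dist_comm (u := y)] at hxy ⊢
    omega

end AlignedFrom

/-- All edges in `X` are traversed by a single shortest path of `G`. -/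
def IsGeodesicEdgeSet (G : SimpleGraph V) (X : Set (Sym2 V)) : Prop :=
  ∃ (u v : V) (p : G.Walk u v), p.length = G.dist u v ∧ X ⊆ p.edgeSet

lemma IsGeodesicEdgeSet.mono {X Y : Set (Sym2 V)} (hY : IsGeodesicEdgeSet G Y) (hXY : X ⊆ Y) :
    IsGeodesicEdgeSet G X :=
  let ⟨u, v, p, hp, hYp⟩ := hY
  ⟨u, v, p, hp, hXY.trans hYp⟩

lemma IsGeodesicEdgeSet.exists_alignedFrom {X : Set (Sym2 V)} (hX : IsGeodesicEdgeSet G X) :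
    ∃ a, AlignedFrom G a {x | ∃ e ∈ X, x ∈ e} := by
  obtain ⟨a, b, p, hp, hXp⟩ := hX
  exact ⟨a, (alignedFrom_support hp).mono
    fun x ⟨e, he, hxe⟩ => p.mem_support_of_mem_edges (hXp he) hxe⟩

lemma mem_support_of_edgeSet_subset {u v : V} (hG : G.Preconnected) {p : G.Walk u v}
    (hp : G.edgeSet ⊆ p.edgeSet) (x : V) : x ∈ p.support := by
  rcases eq_or_ne x u with rfl | hxu
  · exact p.start_mem_support
  · obtain ⟨q⟩ := hG x u
    exact p.fst_mem_support_of_mem_edges (hp (q.adj_snd (q.not_nil_of_ne hxu)))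

lemma toSubgraph_eq_top_of_edgeSet_subset {u v : V} (hG : G.Preconnected) {p : G.Walk u v}
    (hp : G.edgeSet ⊆ p.edgeSet) : p.toSubgraph = ⊤ := by
  ext x y
  · simp [mem_support_of_edgeSet_subset hG hp x]
  · rw [Walk.adj_toSubgraph_iff_mem_edges, Subgraph.top_adj]
    exact ⟨p.adj_of_mem_edges, fun h => hp h⟩

lemma nonempty_iso_pathGraph_of_edgeSet_subset {u v : V} (hG : G.Preconnected) {p : G.Walk u v}
    (hpath : p.IsPath) (hp : G.edgeSet ⊆ p.edgeSet) :
    Nonempty (G ≃g pathGraph (p.length + 1)) := by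
  classical
  have e := hpath.pathGraphIsoToSubgraph
  rw [toSubgraph_eq_top_of_edgeSet_subset hG hp] at e
  exact ⟨Subgraph.topIso.symm.trans e.symm⟩

lemma mk_mem_edges_of_iso_pathGraph {n : ℕ} (φ : G ≃g pathGraph n) {a b x y : V} (p : G.Walk a b)
    (hxy : (φ x).val + 1 = (φ y).val) (hax : φ a ≤ φ x) (hyb : φ y ≤ φ b) :
    s(x, y) ∈ p.edges := by
  obtain ⟨d, hd, hdx, hxd⟩ := p.exists_boundary_dart {z | φ z ≤ φ x} hax (by
    simp only [Set.mem_ofPred_eq, Fin.le_def] at hyb ⊢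
    omega)
  simp only [Set.mem_ofPred_eq, Fin.le_def] at hdx hxd
  have hadj := pathGraph_adj.1 (φ.map_adj_iff.2 d.adj)
  have hfst : d.fst = x := φ.injective (Fin.ext (by omega))
  have hsnd : d.snd = y := φ.injective (Fin.ext (by omega))
  rw [← hfst, ← hsnd]
  exact List.mem_map_of_mem hd

lemma isGeodesicEdgeSet_edgeSet_of_iso_pathGraph (hG : G.Connected) {n : ℕ}
    (φ : G ≃g pathGraph n) : IsGeodesicEdgeSet G G.edgeSet := by
  obtain ⟨w⟩ := hG.nonempty
  have : NeZero n := ⟨(φ w).pos.ne'⟩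
  obtain ⟨p, hp⟩ := hG.exists_walk_length_eq_dist (φ.symm ⊥) (φ.symm ⊤)
  have traverses (x y : V) (hxy : (φ x).val + 1 = (φ y).val) : s(x, y) ∈ p.edges :=
    mk_mem_edges_of_iso_pathGraph φ p hxy (by simp) (by simp)
  refine ⟨_, _, p, hp, Sym2.ind fun x y hxy => ?_⟩
  rcases pathGraph_adj.1 (φ.map_adj_iff.2 hxy) with h | h
  · exact traverses x y h
  · exact Sym2.eq_swap ▸ traverses y x h

theorem isGeodesicEdgeSet_edgeSet_iff_pathGraph (hG : G.Connected) :
    IsGeodesicEdgeSet G G.edgeSet ↔ ∃ n : ℕ, Nonempty (G ≃g pathGraph n) := by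
  constructor
  · rintro ⟨u, v, p, hp, hE⟩
    exact ⟨_, nonempty_iso_pathGraph_of_edgeSet_subset hG.preconnected
      (p.isPath_of_length_eq_dist hp) hE⟩
  · rintro ⟨n, ⟨φ⟩⟩
    exact isGeodesicEdgeSet_edgeSet_of_iso_pathGraph hG φ

lemma isGeodesicEdgeSet_edgeSet_of_alignedFrom (hG : G.Connected) {u v : V}
    (hu : AlignedFrom G u Set.univ) (hmax : ∀ x, G.dist u x ≤ G.dist u v) :
    IsGeodesicEdgeSet G G.edgeSet := by
  obtain ⟨p, hp⟩ := hG.exists_walk_length_eq_dist u v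
  have mem_support (x : V) : x ∈ p.support := by
    have hd : G.dist u (p.getVert (G.dist u x)) = G.dist u x :=
      dist_getVert_of_length_eq_dist hp (hp ▸ hmax x)
    have h0 := hu.dist_add_dist_of_le (Set.mem_univ _) (Set.mem_univ x) hd.le
    have hx : p.getVert (G.dist u x) = x := hG.dist_eq_zero_iff.1 (by omega)
    exact hx ▸ p.getVert_mem_support _
  refine ⟨u, v, p, hp, Sym2.ind fun x y hxy => ?_⟩
  have hdist : G.dist x y = 1 := dist_eq_one_iff_adj.2 hxy
  rcases hu x (Set.mem_univ x) y (Set.mem_univ y) with h | h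
  · exact mk_mem_edges_of_dist_succ hp (mem_support x) (mem_support y) (hdist ▸ h)
  · rw [dist_comm (u := y), hdist] at h
    exact Sym2.eq_swap ▸ mk_mem_edges_of_dist_succ hp (mem_support y) (mem_support x) h

section AlignedQuadruples

variable {u v u' x : V}

lemma one_add_dist_eq_of_dist_max (hG : G.Connected) (hmax : ∀ x y, G.dist x y ≤ G.dist u v)
    (huu' : G.Adj u u') (hx : x ≠ u) {a : V} (ha : AlignedFrom G a {u, u', x, v}) :
    1 + G.dist u' x = G.dist u x := by
  have hu : AlignedFrom G u {u, u', x, v} :=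
    ha.of_dist_max (by simp) (by simp) fun y _ z _ => hmax y z
  have hd : G.dist u u' = 1 := dist_eq_one_iff_adj.2 huu'
  have hpos : 0 < G.dist u x := hG.pos_dist_of_ne hx.symm
  exact hd ▸ hu.dist_add_dist_of_le (by simp) (by simp) (by omega)

lemma alignedFrom_univ_of_dist_max (hG : G.Connected) (hmax : ∀ x y, G.dist x y ≤ G.dist u v)
    (huu' : G.Adj u u') (h : ∀ x y, ∃ a, AlignedFrom G a {u, u', x, y}) :
    AlignedFrom G u Set.univ := by
  intro x _ y _
  rcases eq_or_ne x u with rfl | hx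
  · simp
  rcases eq_or_ne y u with rfl | hy
  · simp
  obtain ⟨_, ha⟩ := h x y
  obtain ⟨_, ha_xv⟩ := h x v
  obtain ⟨_, ha_yv⟩ := h y v
  have u_not_between : G.dist x u + G.dist u y ≠ G.dist x y := by
    have hu'x := one_add_dist_eq_of_dist_max hG hmax huu' hx ha_xv
    have hu'y := one_add_dist_eq_of_dist_max hG hmax huu' hy ha_yv
    have := hG.dist_triangle (u := x) (v := u') (w := y)
    rw [dist_comm] at hu'x
    rw [dist_comm (u := x) (v := u)]
    omega
  have := ha.dist_add_dist_trichotomy (u := u) (x := x) (y := y) (by simp) (by simp) (by simp)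
  tauto

lemma exists_alignedFrom_of_triples [Nontrivial V] (hG : G.Preconnected)
    (h : ∀ e ∈ G.edgeSet, ∀ f ∈ G.edgeSet, ∀ g ∈ G.edgeSet, IsGeodesicEdgeSet G {e, f, g})
    (huu' : G.Adj u u') (x y : V) : ∃ a, AlignedFrom G a {u, u', x, y} := by
  obtain ⟨x', hx⟩ := hG.exists_adj_of_nontrivial x
  obtain ⟨y', hy⟩ := hG.exists_adj_of_nontrivial y
  obtain ⟨a, ha⟩ := (h s(u, u') huu' s(x, x') hx s(y, y') hy).exists_alignedFrom
  refine ⟨a, ha.mono ?_⟩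
  rintro z (rfl | rfl | rfl | rfl) <;> simp

end AlignedQuadruples

theorem isGeodesicEdgeSet_edgeSet_of_triples [Nontrivial V] (hdiam : G.ediam ≠ ⊤)
    (h : ∀ e ∈ G.edgeSet, ∀ f ∈ G.edgeSet, ∀ g ∈ G.edgeSet, IsGeodesicEdgeSet G {e, f, g}) :
    IsGeodesicEdgeSet G G.edgeSet := by
  have hG : G.Connected := connected_of_ediam_ne_top hdiam
  obtain ⟨u, v, huv⟩ := G.exists_dist_eq_diam
  have hmax (x y : V) : G.dist x y ≤ G.dist u v := huv ▸ dist_le_diam hdiam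
  obtain ⟨u', huu'⟩ := hG.preconnected.exists_adj_of_nontrivial u
  exact isGeodesicEdgeSet_edgeSet_of_alignedFrom hG
    (alignedFrom_univ_of_dist_max hG hmax huu'
      (exists_alignedFrom_of_triples hG.preconnected h huu'))
    (hmax u)

section TwoEdges

lemma ncard_edgeSet_top_ne_two [Finite V] : (⊤ : SimpleGraph V).edgeSet.ncard ≠ 2 := by
  classical
  have := Fintype.ofFinite V
  rw [← coe_edgeFinset, Set.ncard_coe_finset, card_edgeFinset_top_eq_card_choose_two]
  rcases le_or_gt (Fintype.card V) 2 with h | h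
  · exact ((Nat.choose_le_choose 2 h).trans_lt (by decide)).ne
  · exact ((by decide : 2 < Nat.choose 3 2).trans_le (Nat.choose_le_choose 2 h)).ne'

lemma edgeSet_subset_of_ncard_le_length {u v : V} {p : G.Walk u v} (hp : p.IsTrail)
    (hfin : G.edgeSet.Finite) (h : G.edgeSet.ncard ≤ p.length) : G.edgeSet ⊆ p.edgeSet := by
  classical
  have hcard : p.edgeSet.ncard = p.length := by
    rw [← Walk.coe_edges_toFinset, Set.ncard_coe_finset,
      List.toFinset_card_of_nodup hp.edges_nodup, Walk.length_edges]
  exact (Set.eq_of_subset_of_ncard_le (fun e he => p.edges_subset_edgeSet he)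
    (h.trans_eq hcard.symm) hfin).ge

lemma isGeodesicEdgeSet_edgeSet_of_ncard_eq_two [Finite V] [Nontrivial V] (hG : G.Connected)
    (hm : G.edgeSet.ncard = 2) : IsGeodesicEdgeSet G G.edgeSet := by
  have hdiam : 2 ≤ G.diam := by
    have h0 : G.diam ≠ 0 := connected_iff_diam_ne_zero.1 hG
    have h1 : G.diam ≠ 1 := fun h => ncard_edgeSet_top_ne_two (diam_eq_one.1 h ▸ hm)
    omega
  obtain ⟨u, v, huv⟩ := G.exists_dist_eq_diam
  obtain ⟨p, hpath, hp⟩ := hG.exists_path_of_dist u v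
  exact ⟨u, v, p, hp, edgeSet_subset_of_ncard_le_length hpath.isTrail (Set.toFinite _) (by omega)⟩

end TwoEdges

section Egp

variable {X : Set (Sym2 V)}

lemma IsGeodesicEdgeSet.ncard_le_two (hX : IsGeodesicEdgeSet G X) (hgp : G.IsEdgeGPSet X) :
    X.ncard ≤ 2 := by
  obtain ⟨u, v, p, hp, hXp⟩ := hX
  have hle : (X ∩ p.edgeSet).ncard ≤ 2 := hgp.2 u v p (p.isPath_of_length_eq_dist hp) hp
  rwa [Set.inter_eq_left.2 hXp] at hle

lemma isEdgeGPSet_of_ncard_le_two (hXE : X ⊆ G.edgeSet) (hfin : X.Finite) (hX : X.ncard ≤ 2) :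
    G.IsEdgeGPSet X :=
  ⟨hXE, fun _ _ _ _ _ => (Set.ncard_le_ncard Set.inter_subset_left hfin).trans hX⟩

lemma isEdgeGPSet_of_not_isGeodesicEdgeSet (hXE : X ⊆ G.edgeSet) (hX : X.ncard = 3)
    (h : ¬ IsGeodesicEdgeSet G X) : G.IsEdgeGPSet X := by
  have hfin : X.Finite := Set.finite_of_ncard_ne_zero (by omega)
  refine ⟨hXE, fun u v p _ hp => not_lt.1 fun hlt => h ⟨u, v, p, hp, ?_⟩⟩
  have hinter : X ∩ p.edgeSet = X :=
    Set.eq_of_subset_of_ncard_le Set.inter_subset_left (hX.trans_le hlt) hfin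
  exact Set.inter_eq_left.1 hinter

lemma ncard_le_egp (hE : G.edgeSet.Finite) (hX : G.IsEdgeGPSet X) : X.ncard ≤ G.egp := by
  refine le_csSup ⟨G.edgeSet.ncard, ?_⟩ ⟨X, hX, rfl⟩
  rintro _ ⟨Y, hY, rfl⟩
  exact Set.ncard_le_ncard hY.1 hE

lemma two_le_egp (hm : 2 ≤ G.edgeSet.ncard) : 2 ≤ G.egp := by
  have hE : G.edgeSet.Finite := Set.finite_of_ncard_ne_zero (by omega)
  obtain ⟨X, hXE, hX⟩ := Set.exists_subset_card_eq hm
  exact hX ▸ ncard_le_egp hE (isEdgeGPSet_of_ncard_le_two hXE (hE.subset hXE) hX.le)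

lemma egp_le_two_of_isGeodesicEdgeSet_edgeSet (h : IsGeodesicEdgeSet G G.edgeSet) :
    G.egp ≤ 2 := by
  refine csSup_le' ?_
  rintro _ ⟨X, hX, rfl⟩
  exact (h.mono hX.1).ncard_le_two hX

lemma isGeodesicEdgeSet_triple_of_egp_le_two (hm : 3 ≤ G.edgeSet.ncard) (h : G.egp ≤ 2)
    {e f g : Sym2 V} (he : e ∈ G.edgeSet) (hf : f ∈ G.edgeSet) (hg : g ∈ G.edgeSet) :
    IsGeodesicEdgeSet G {e, f, g} := by
  have hE : G.edgeSet.Finite := Set.finite_of_ncard_ne_zero (by omega)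
  have hsub : {e, f, g} ⊆ G.edgeSet := by
    rintro _ (rfl | rfl | rfl) <;> assumption
  have hcard : ({e, f, g} : Set (Sym2 V)).ncard ≤ 3 :=
    (Set.ncard_insert_le e {f, g}).trans
      (Nat.succ_le_succ (by simpa only [Set.ncard_singleton] using Set.ncard_insert_le f {g}))
  obtain ⟨X, hX, hXE, hX3⟩ := Set.exists_subsuperset_card_eq hsub hcard hm
  suffices IsGeodesicEdgeSet G X from this.mono hX
  by_contra hnot
  have := ncard_le_egp hE (isEdgeGPSet_of_not_isGeodesicEdgeSet hXE hX3 hnot)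
  omega

theorem egp_eq_two_iff_isGeodesicEdgeSet_edgeSet [Finite V] (hG : G.Connected)
    (hm : 2 ≤ G.edgeSet.ncard) : G.egp = 2 ↔ IsGeodesicEdgeSet G G.edgeSet := by
  have hne : G.edgeSet.Nonempty := Set.nonempty_of_ncard_ne_zero (by omega)
  obtain ⟨_, _, huv⟩ := ne_bot_iff_exists_adj.1 (edgeSet_nonempty.1 hne)
  have : Nontrivial V := huv.nontrivial
  refine ⟨fun h => ?_, fun h =>
    (egp_le_two_of_isGeodesicEdgeSet_edgeSet h).antisymm (two_le_egp hm)⟩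
  rcases hm.eq_or_lt with hm | hm
  · exact isGeodesicEdgeSet_edgeSet_of_ncard_eq_two hG hm.symm
  · exact isGeodesicEdgeSet_edgeSet_of_triples (connected_iff_ediam_ne_top.1 hG)
      fun e he f hf g hg => isGeodesicEdgeSet_triple_of_egp_le_two hm h.le he hf hg

end Egp

end EdgeGeneralPosition

/-- For a finite connected graph `G` with at least two edges,
`gp_e(G) = 2` if and only if `G` is a path graph. -/
theorem egp_eq_two_iff_path {V : Type*} [Fintype V] (G : SimpleGraph V)
    (hG : G.Connected) (hm : 2 ≤ G.edgeSet.ncard) :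
    G.egp = 2 ↔ ∃ n : ℕ, Nonempty (G ≃g SimpleGraph.pathGraph n) :=
  (EdgeGeneralPosition.egp_eq_two_iff_isGeodesicEdgeSet_edgeSet hG hm).trans
    (EdgeGeneralPosition.isGeodesicEdgeSet_edgeSet_iff_pathGraph hG)
end

section
/- Let G be a finite connected simple graph with gp_e(G) = 4. Then (i) Δ(G) ≤ 4, and (ii) if Δ(G) = 4, then G is bipartite. -/
namespace EdgeGeneralPosition

open SimpleGraph

variable {V : Type*} {G : SimpleGraph V}

lemma ncard_le_egp_s12 [Finite G.edgeSet] {X : Set (Sym2 V)} (hX : G.IsEdgeGPSet X) :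
    X.ncard ≤ G.egp := by
  -- `sSup` of an unbounded set of naturals is `0`, so boundedness matters here.
  refine le_csSup ⟨G.edgeSet.ncard, ?_⟩ ⟨X, hX, rfl⟩
  rintro n ⟨Y, hY, rfl⟩
  exact Set.ncard_le_ncard hY.1

lemma ncard_incidenceSet (G : SimpleGraph V) (x : V) [Fintype (G.neighborSet x)] :
    (G.incidenceSet x).ncard = G.degree x := by
  classical
  rw [← G.card_incidenceSet_eq_degree x, ← Nat.card_coe_set_eq, Nat.card_eq_fintype_card]

lemma incidenceSet_inter_edges_eq_empty {a b x : V} {p : G.Walk a b} (hx : x ∉ p.support) :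
    G.incidenceSet x ∩ {e | e ∈ p.edges} = ∅ :=
  Set.eq_empty_of_forall_notMem fun _ ⟨he, hep⟩ => hx (p.mem_support_of_mem_edges hep he.2)

lemma incidenceSet_inter_edges_subset_pair {a b x : V} {p : G.Walk a x} {q : G.Walk x b}
    (hp : p.IsPath) (hq : q.IsPath) :
    G.incidenceSet x ∩ {e | e ∈ (p.append q).edges} ⊆ {s(x, p.penultimate), s(x, q.snd)} := by
  rintro e ⟨⟨-, hxe⟩, he⟩
  obtain ⟨y, rfl⟩ := Sym2.mem_iff_exists.mp hxe
  rw [Set.mem_ofPred_eq, Walk.edges_append, List.mem_append] at he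
  rcases he with hep | heq
  · exact Or.inl (by rw [hp.eq_penultimate_of_mem_edges hep])
  · exact Or.inr (by rw [hq.eq_snd_of_mem_edges heq]; rfl)

lemma ncard_incidenceSet_inter_edges_le_two {a b : V} {p : G.Walk a b} (hp : p.IsPath) (x : V) :
    (G.incidenceSet x ∩ {e | e ∈ p.edges}).ncard ≤ 2 := by
  classical
  by_cases hx : x ∈ p.support
  · have hsub := incidenceSet_inter_edges_subset_pair (hp.takeUntil hx) (hp.dropUntil hx)
    rw [p.take_spec hx] at hsub
    exact (Set.ncard_le_ncard hsub).trans ((Set.ncard_insert_le _ _).trans_eq (by simp))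
  · simp [incidenceSet_inter_edges_eq_empty hx]

lemma isEdgeGPSet_incidenceSet (G : SimpleGraph V) (x : V) : G.IsEdgeGPSet (G.incidenceSet x) :=
  ⟨G.incidenceSet_subset x, fun _ _ _ hp _ => ncard_incidenceSet_inter_edges_le_two hp x⟩

lemma degree_le_egp [Finite G.edgeSet] (x : V) [Fintype (G.neighborSet x)] :
    G.degree x ≤ G.egp :=
  ncard_incidenceSet G x ▸ ncard_le_egp_s12 (isEdgeGPSet_incidenceSet G x)

lemma dist_start_getVert {a b : V} {p : G.Walk a b} (hp : p.length = G.dist a b) {i : ℕ}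
    (hi : i ≤ p.length) : G.dist a (p.getVert i) = i := by
  rw [← length_eq_dist_of_subwalk hp (p.isSubwalk_take i), Walk.take_length, min_eq_left hi]

lemma dist_start_ne_of_mem_edges {a b u v : V} {p : G.Walk a b} (hp : p.length = G.dist a b)
    (he : s(u, v) ∈ p.edges) : G.dist a u ≠ G.dist a v := by
  obtain ⟨i, hi, huv⟩ := p.mk_mem_edges_iff_exists.mp he
  have hdist := dist_start_getVert hp hi.le
  have hdist_succ := dist_start_getVert hp (Nat.succ_le_of_lt hi)
  rcases Sym2.eq_iff.mp huv with ⟨rfl, rfl⟩ | ⟨rfl, rfl⟩ <;> lia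

/-- The two parts into which `x` splits the path are shortest paths with an end at `x`. -/
lemma dist_ne_of_mem_support_of_mem_edges {a b x u v : V} {p : G.Walk a b}
    (hp : p.length = G.dist a b) (hx : x ∈ p.support) (he : s(u, v) ∈ p.edges) :
    G.dist x u ≠ G.dist x v := by
  classical
  rw [← p.take_spec hx, Walk.edges_append, List.mem_append] at he
  rcases he with he | he
  · have htake : (p.takeUntil x hx).reverse.length = G.dist x a := by
      rw [Walk.length_reverse, dist_comm]
      exact length_eq_dist_of_subwalk hp (p.isSubwalk_takeUntil hx)
    exact dist_start_ne_of_mem_edges htake (by simpa using he)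
  · exact dist_start_ne_of_mem_edges (length_eq_dist_of_subwalk hp (p.isSubwalk_dropUntil hx)) he

/-- An edge outside the component of `x` also counts as equidistant, since `dist` is `0` there; no
path through `x` contains it either. -/
lemma isEdgeGPSet_insert_incidenceSet {x u v : V} (huv : G.Adj u v)
    (hd : G.dist x u = G.dist x v) : G.IsEdgeGPSet (insert s(u, v) (G.incidenceSet x)) := by
  refine ⟨Set.insert_subset huv (G.incidenceSet_subset x), fun a b p hp hl => ?_⟩
  by_cases he : s(u, v) ∈ {e | e ∈ p.edges}
  · have hx : x ∉ p.support := fun hx => dist_ne_of_mem_support_of_mem_edges hl hx he hd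
    rw [Set.insert_inter_of_mem he, incidenceSet_inter_edges_eq_empty hx, insert_empty_eq,
      Set.ncard_singleton]
    exact one_le_two
  · rw [Set.insert_inter_of_notMem he]
    exact ncard_incidenceSet_inter_edges_le_two hp x

lemma notMem_incidenceSet_of_dist_eq {x u v : V} (hd : G.dist x u = G.dist x v) :
    s(u, v) ∉ G.incidenceSet x := by
  rw [mk'_mem_incidenceSet_iff]
  rintro ⟨huv, rfl | rfl⟩
  · simp [dist_eq_one_iff_adj.mpr huv] at hd
  · simp [dist_eq_one_iff_adj.mpr huv.symm] at hd

lemma degree_lt_egp_of_dist_eq [Finite G.edgeSet] {x u v : V} [Fintype (G.neighborSet x)]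
    (huv : G.Adj u v) (hd : G.dist x u = G.dist x v) : G.degree x < G.egp := by
  have hfin : (G.incidenceSet x).Finite := G.edgeSet.toFinite.subset (G.incidenceSet_subset x)
  calc
    G.degree x < G.degree x + 1 := Nat.lt_succ_self _
    _ = (insert s(u, v) (G.incidenceSet x)).ncard := by
      rw [Set.ncard_insert_of_notMem (notMem_incidenceSet_of_dist_eq hd) hfin, ncard_incidenceSet]
    _ ≤ G.egp := ncard_le_egp_s12 (isEdgeGPSet_insert_incidenceSet huv hd)

lemma colorable_two_of_forall_adj_dist_ne (x : V)
    (h : ∀ u v, G.Adj u v → G.dist x u ≠ G.dist x v) : G.Colorable 2 := by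
  refine ⟨Coloring.mk (fun v => Fin.ofNat 2 (G.dist x v)) fun {u v} huv heq => ?_⟩
  have hne : G.dist x u ≠ G.dist x v := h u v huv
  have hparity : G.dist x u % 2 = G.dist x v % 2 := congrArg Fin.val heq
  rcases huv.diff_dist_adj (u := x) with hdiff | hdiff | hdiff <;> lia

lemma colorable_two_of_egp_le_degree [Finite G.edgeSet] (x : V) [Fintype (G.neighborSet x)]
    (hx : G.egp ≤ G.degree x) : G.Colorable 2 :=
  colorable_two_of_forall_adj_dist_ne x fun _ _ huv hd =>
    hx.not_gt (degree_lt_egp_of_dist_eq huv hd)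

end EdgeGeneralPosition

open EdgeGeneralPosition in
theorem maxDegree_le_four_of_egp_eq_four_general {V : Type*} [Fintype V] (G : SimpleGraph V)
    [DecidableRel G.Adj] :
    G.maxDegree ≤ G.egp ∧ (G.maxDegree = G.egp → G.Colorable 2) := by
  refine ⟨G.maxDegree_le_of_forall_degree_le _ fun x => degree_le_egp x, fun hmax => ?_⟩
  cases isEmpty_or_nonempty V with
  | inl _ => exact SimpleGraph.Colorable.of_isEmpty 2
  | inr _ =>
    obtain ⟨x, hx⟩ := G.exists_maximal_degree_vertex
    exact colorable_two_of_egp_le_degree x (hmax.symm.trans hx).le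

/-- If `G` is a finite connected graph with `gp_e(G) = 4`, then
(i) `Δ(G) ≤ 4`, and (ii) if `Δ(G) = 4` then `G` is bipartite (`2`-colorable). -/
theorem maxDegree_le_four_of_egp_eq_four {V : Type*} [Fintype V] (G : SimpleGraph V)
    [DecidableRel G.Adj] (hG : G.Connected) (h : G.egp = 4) :
    G.maxDegree ≤ 4 ∧ (G.maxDegree = 4 → G.Colorable 2) := by
  simpa only [h] using maxDegree_le_four_of_egp_eq_four_general G
end

section
/- If G is a finite connected block graph, then gp_e(G) ≥ s'(G), where s'(G) is the number of simplicial edges of G; moreover, the set of all simplicial edges of G is an edge general position set of G. -/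
/-- `G` is a block graph: every block (maximal connected subgraph without a cut-vertex)
of `G` is complete.  Equivalently — and this is the form used here — any two distinct
vertices lying on a common cycle of `G` are adjacent, i.e. the vertex set of every
cycle is a clique. -/
def SimpleGraph.IsBlockGraph {V : Type*} (G : SimpleGraph V) : Prop :=
  ∀ ⦃v : V⦄ (c : G.Walk v v), c.IsCycle → G.IsClique {x | x ∈ c.support}

/-- A vertex is simplicial if its neighbourhood induces a complete subgraph. -/
def SimpleGraph.IsSimplicialVertex {V : Type*} (G : SimpleGraph V) (v : V) : Prop :=
  G.IsClique (G.neighborSet v)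

/-- The set of simplicial edges of `G`: edges incident with at least one simplicial
vertex. -/
def SimpleGraph.simplicialEdges {V : Type*} (G : SimpleGraph V) : Set (Sym2 V) :=
  {e | e ∈ G.edgeSet ∧ ∃ v ∈ e, G.IsSimplicialVertex v}

/-!
Geodesics are the walks that realise the distance of their ends, so two vertices that are two steps
apart on a geodesic are distinct and not adjacent. Hence an inner vertex of a geodesic has two
non-adjacent neighbours and is not simplicial: a simplicial edge on a geodesic contains one of its
ends, which makes it the first or the last edge.
-/

section Geodesic

open SimpleGraph

variable {V : Type*} {G : SimpleGraph V} {u v : V} {p : G.Walk u v}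

lemma dist_getVert_getVert_add (hp : p.length = G.dist u v) {i k : ℕ} (hik : i + k ≤ p.length) :
    G.dist (p.getVert i) (p.getVert (i + k)) = k := by
  have hsub : ((p.drop i).take k).IsSubwalk p :=
    ((p.drop i).isSubwalk_take k).trans (p.isSubwalk_drop i)
  have hdist := length_eq_dist_of_subwalk hp hsub
  rw [Walk.take_length, Walk.drop_length, Walk.drop_getVert] at hdist
  omega

lemma not_isSimplicialVertex_getVert_add_one (hp : p.length = G.dist u v) {i : ℕ}
    (hi : i + 1 < p.length) : ¬ G.IsSimplicialVertex (p.getVert (i + 1)) := by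
  intro hs
  have hdist : G.dist (p.getVert i) (p.getVert (i + 2)) = 2 := dist_getVert_getVert_add hp hi
  have hne : p.getVert i ≠ p.getVert (i + 2) := by
    intro heq
    simp [heq] at hdist
  have hadj : G.Adj (p.getVert i) (p.getVert (i + 2)) :=
    hs (p.adj_getVert_succ (Nat.lt_of_succ_lt hi)).symm (p.adj_getVert_succ hi) hne
  have hone := dist_eq_one_iff_adj.mpr hadj
  omega

lemma eq_or_eq_of_isSimplicialVertex_of_mem_support (hp : p.length = G.dist u v) {w : V}
    (hs : G.IsSimplicialVertex w) (hw : w ∈ p.support) : w = u ∨ w = v := by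
  obtain ⟨j, rfl, hj⟩ := Walk.mem_support_iff_exists_getVert.mp hw
  rcases hj.eq_or_lt with rfl | hlt
  · exact .inr p.getVert_length
  · cases j with
    | zero => exact .inl p.getVert_zero
    | succ i => exact absurd hs (not_isSimplicialVertex_getVert_add_one hp hlt)

lemma simplicialEdges_inter_edges_subset (hp : p.length = G.dist u v) :
    G.simplicialEdges ∩ {e | e ∈ p.edges} ⊆ {s(u, p.snd), s(v, p.penultimate)} := by
  rintro _ ⟨⟨-, w, ⟨x, rfl⟩, hs⟩, he⟩
  have hpath : p.IsPath := p.isPath_of_length_eq_dist hp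
  have hw : w ∈ p.support := p.fst_mem_support_of_mem_edges he
  rcases eq_or_eq_of_isSimplicialVertex_of_mem_support hp hs hw with rfl | rfl
  · exact .inl (congrArg (s(w, ·)) (hpath.eq_snd_of_mem_edges he))
  · exact .inr (congrArg (s(w, ·)) (hpath.eq_penultimate_of_mem_edges he))

end Geodesic

theorem isEdgeGPSet_simplicialEdges {V : Type*} (G : SimpleGraph V) :
    G.IsEdgeGPSet G.simplicialEdges := by
  refine ⟨fun _ he => he.1, fun u v p _ hp => ?_⟩
  calc (G.simplicialEdges ∩ {e | e ∈ p.edges}).ncard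
    _ ≤ ({s(u, p.snd), s(v, p.penultimate)} : Set (Sym2 V)).ncard :=
      Set.ncard_le_ncard (simplicialEdges_inter_edges_subset hp)
    _ ≤ ({s(v, p.penultimate)} : Set (Sym2 V)).ncard + 1 := Set.ncard_insert_le _ _
    _ = 2 := by rw [Set.ncard_singleton]

lemma ncard_le_egp_of_isEdgeGPSet {V : Type*} {G : SimpleGraph V} (hfin : G.edgeSet.Finite)
    {X : Set (Sym2 V)} (hX : G.IsEdgeGPSet X) : X.ncard ≤ G.egp := by
  have hbdd : BddAbove {n | ∃ Y : Set (Sym2 V), G.IsEdgeGPSet Y ∧ Y.ncard = n} := by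
    refine ⟨G.edgeSet.ncard, ?_⟩
    rintro _ ⟨Y, hY, rfl⟩
    exact Set.ncard_le_ncard hY.1 hfin
  exact le_csSup hbdd ⟨X, hX, rfl⟩

theorem simplicialEdges_le_egp_general {V : Type*} (G : SimpleGraph V) (hfin : G.edgeSet.Finite) :
    G.simplicialEdges.ncard ≤ G.egp ∧ G.IsEdgeGPSet G.simplicialEdges :=
  ⟨ncard_le_egp_of_isEdgeGPSet hfin (isEdgeGPSet_simplicialEdges G),
    isEdgeGPSet_simplicialEdges G⟩

/-- If `G` is a finite connected block graph, then `gp_e(G) ≥ s'(G)`, the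
number of simplicial edges of `G`; moreover the set of all simplicial edges of `G` is an
edge general position set of `G`. -/
theorem simplicialEdges_le_egp {V : Type*} [Fintype V] (G : SimpleGraph V)
    (hG : G.Connected) (hb : G.IsBlockGraph) :
    G.simplicialEdges.ncard ≤ G.egp ∧ G.IsEdgeGPSet G.simplicialEdges :=
  simplicialEdges_le_egp_general G G.edgeSet.toFinite
end
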